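/- Let X be a locally compact CAT(0) 2-complex and let c be a simple closed geodesic in ∂_T X of length strictly less than 4π. Then for every x ∈ supp(c), the loop log_x(c) is freely homotopic in Link(X,x) to a simple closed geodesic in Link(X,x). -/

import Mathlib

open Set

noncomputable section

namespace CAT0SC

universe u

variable {X : Type u} [MetricSpace X]

/-! ### Basic geodesic notions -/

/-- `f` is a unit-speed (minimal) geodesic on the set `s ⊆ ℝ`. -/
def IsGeodesicOn (f : ℝ → X) (s : Set ℝ) : Prop :=
  ∀ a ∈ s, ∀ b ∈ s, dist (f a) (f b) = |a - b|

/-- A geodesic ray, parametrized on `[0, ∞)`. -/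
def IsRay (f : ℝ → X) : Prop := IsGeodesicOn f (Set.Ici 0)

/-- A complete geodesic (line), parametrized on all of `ℝ`. -/
def IsCompleteGeodesic (f : ℝ → X) : Prop := IsGeodesicOn f Set.univ

/-- A geodesic segment from `x` to `y`, parametrized on `[0, dist x y]`. -/
def IsGeodesicSegment (f : ℝ → X) (x y : X) : Prop :=
  IsGeodesicOn f (Set.Icc 0 (dist x y)) ∧ f 0 = x ∧ f (dist x y) = y

/-- `m` is a midpoint of `x` and `y`. -/
def IsMidpoint (m x y : X) : Prop :=
  dist x m = dist x y / 2 ∧ dist m y = dist x y / 2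

/-- A metric space is CAT(0) iff it is geodesic and satisfies the CN-inequality of
Bruhat--Tits. -/
def IsCAT0 (Y : Type*) [MetricSpace Y] : Prop :=
  (∀ x y : Y, ∃ f : ℝ → Y, IsGeodesicSegment f x y) ∧
  (∀ x y z m : Y, IsMidpoint m y z →
    dist x m ^ 2 ≤ dist x y ^ 2 / 2 + dist x z ^ 2 / 2 - dist y z ^ 2 / 4)

/-- A subset is convex if it contains every geodesic segment between its points. -/
def IsConvexSubset (A : Set X) : Prop :=
  ∀ x ∈ A, ∀ y ∈ A, ∀ f : ℝ → X, IsGeodesicSegment f x y →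
    ∀ t ∈ Set.Icc 0 (dist x y), f t ∈ A

/-! ### The ideal boundary -/

/-- Two rays are asymptotic if they are at bounded distance. -/
def Asymptotic (f g : ℝ → X) : Prop := ∃ C : ℝ, ∀ t ≥ (0 : ℝ), dist (f t) (g t) ≤ C

/-- The type of geodesic rays in `X`. -/
def GeodesicRay (X : Type u) [MetricSpace X] : Type u := {f : ℝ → X // IsRay f}

/-- Asymptoty as an equivalence relation on rays. -/
def raySetoid (X : Type u) [MetricSpace X] : Setoid (GeodesicRay X) where
  r f g := Asymptotic f.1 g.1
  iseqv := by
    constructor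
    · intro f
      exact ⟨0, fun t _ => by simp⟩
    · rintro f g ⟨C, hC⟩
      exact ⟨C, fun t ht => by rw [dist_comm]; exact hC t ht⟩
    · rintro f g h ⟨C, hC⟩ ⟨D, hD⟩
      exact ⟨C + D, fun t ht =>
        le_trans (dist_triangle _ (g.1 t) _) (add_le_add (hC t ht) (hD t ht))⟩

/-- The ideal boundary of `X`: asymptote classes of geodesic rays. -/
def IdealBoundary (X : Type u) [MetricSpace X] : Type u := Quotient (raySetoid X)

/-- The boundary point determined by a ray. -/
def rayClass {f : ℝ → X} (hf : IsRay f) : IdealBoundary X :=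
  Quotient.mk (raySetoid X) ⟨f, hf⟩

/-- `f` is a ray belonging to the asymptote class `ξ`. -/
def RepresentsRay (f : ℝ → X) (ξ : IdealBoundary X) : Prop :=
  ∃ hf : IsRay f, rayClass hf = ξ

/-- The complete geodesic `c` has the ideal points `ξ` (forward) and `η` (backward) as its two
endpoints. -/
def HasEndpoints (c : ℝ → X) (ξ η : IdealBoundary X) : Prop :=
  IsCompleteGeodesic c ∧ RepresentsRay (fun t => c t) ξ ∧ RepresentsRay (fun t => c (-t)) η

/-- There is a complete geodesic in `X` with `ξ` and `η` as its endpoints. -/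
def EndpointsJoined (ξ η : IdealBoundary X) : Prop := ∃ c : ℝ → X, HasEndpoints c ξ η

/-! ### Hyperbolic isometries -/

/-- `c` is an axis of the isometry `g`, with translation length `l > 0`. -/
def IsAxis (g : X ≃ᵢ X) (c : ℝ → X) (l : ℝ) : Prop :=
  IsCompleteGeodesic c ∧ 0 < l ∧ ∀ t : ℝ, g (c t) = c (t + l)

/-- A hyperbolic isometry: one translating a complete geodesic. -/
def IsHyperbolic (g : X ≃ᵢ X) : Prop := ∃ c l, IsAxis g c l

/-- `ξ = g(+∞)`, the forward endpoint of the axes of `g`. -/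
def ForwardFixedPoint (g : X ≃ᵢ X) (ξ : IdealBoundary X) : Prop :=
  ∃ c l, IsAxis g c l ∧ RepresentsRay (fun t => c t) ξ

/-- `ξ = g(-∞)`, the backward endpoint of the axes of `g`. -/
def BackwardFixedPoint (g : X ≃ᵢ X) (ξ : IdealBoundary X) : Prop :=
  ∃ c l, IsAxis g c l ∧ RepresentsRay (fun t => c (-t)) ξ

/-- `ξ ∈ {g(+∞), g(-∞)}`. -/
def IsPoleOf (g : X ≃ᵢ X) (ξ : IdealBoundary X) : Prop :=
  ForwardFixedPoint g ξ ∨ BackwardFixedPoint g ξ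

/-! ### Angles -/

/-- The Euclidean comparison angle at `p` between `x` and `y`. -/
def compAngle (p x y : X) : ℝ :=
  Real.arccos ((dist p x ^ 2 + dist p y ^ 2 - dist x y ^ 2) / (2 * dist p x * dist p y))

/-- The (Alexandrov) angle `∠ₓ(y, z)`.  In a CAT(0) space the comparison angle is monotone
along the geodesics, so the limit defining the angle equals the infimum used here. -/
def angleAt (x y z : X) : ℝ :=
  sInf {θ : ℝ | ∃ (f g : ℝ → X) (s t : ℝ), IsGeodesicSegment f x y ∧ IsGeodesicSegment g x z ∧
    0 < s ∧ s ≤ dist x y ∧ 0 < t ∧ t ≤ dist x z ∧ θ = compAngle x (f s) (g t)}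

/-! ### The Tits metric -/

/-- The Tits angle between two boundary points: the limit (= supremum, by monotonicity and
independence of base point) of comparison angles between rays representing them. -/
def titsAngle (ξ η : IdealBoundary X) : ℝ :=
  sSup {θ : ℝ | ∃ (f g : ℝ → X) (hf : IsRay f) (hg : IsRay g) (t : ℝ),
    f 0 = g 0 ∧ rayClass hf = ξ ∧ rayClass hg = η ∧ 0 < t ∧ θ = compAngle (f 0) (f t) (g t)}

/-- Continuity of a curve with respect to a (not necessarily symmetric) distance function. -/
def RhoContinuousOn {α : Type*} (ρ : α → α → ENNReal) (γ : ℝ → α) (a b : ℝ) : Prop :=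
  ∀ t ∈ Set.Icc a b, ∀ ε : ENNReal, 0 < ε → ∃ δ : ℝ, 0 < δ ∧ ∀ s ∈ Set.Icc a b,
    |s - t| < δ → ρ (γ s) (γ t) < ε ∧ ρ (γ t) (γ s) < ε

/-- The length of a curve `γ : [a,b] → α` with respect to the distance function `ρ`:
the supremum of sums over monotone partitions. -/
def rhoLength {α : Type*} (ρ : α → α → ENNReal) (γ : ℝ → α) (a b : ℝ) : ENNReal :=
  ⨆ n : ℕ, ⨆ c : {c : Fin (n + 1) → ℝ // Monotone c ∧ ∀ i, c i ∈ Set.Icc a b},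
    ∑ i : Fin n, ρ (γ (c.1 i.castSucc)) (γ (c.1 i.succ))

/-- The intrinsic (path/length) metric induced by a distance function `ρ`:
the infimum of lengths of continuous curves joining two points. -/
def lengthDist {α : Type*} (ρ : α → α → ENNReal) (x y : α) : ENNReal :=
  ⨅ γ : {γ : ℝ → α // γ 0 = x ∧ γ 1 = y ∧ RhoContinuousOn ρ γ 0 1}, rhoLength ρ γ.1 0 1

/-- The Tits metric on the ideal boundary: the path metric induced by the Tits angle. -/
def titsDist (ξ η : IdealBoundary X) : ENNReal :=
  lengthDist (fun a b => ENNReal.ofReal (titsAngle a b)) ξ η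

/-- `σ` is a minimal (unit-speed) geodesic for the Tits metric on the set `s`. -/
def TitsMinGeodesicOn (σ : ℝ → IdealBoundary X) (s : Set ℝ) : Prop :=
  ∀ a ∈ s, ∀ b ∈ s, titsDist (σ a) (σ b) = ENNReal.ofReal |a - b|

/-- `σ` is a (local) geodesic for the Tits metric on the set `s`. -/
def TitsGeodesicOn (σ : ℝ → IdealBoundary X) (s : Set ℝ) : Prop :=
  ∀ t ∈ s, ∃ δ : ℝ, 0 < δ ∧ TitsMinGeodesicOn σ (s ∩ Set.Icc (t - δ) (t + δ))

/-- A terminal point of the Tits boundary: one lying in the interior of no geodesic segment. -/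
def IsTerminalPoint (ξ : IdealBoundary X) : Prop :=
  ¬ ∃ (σ : ℝ → IdealBoundary X) (a b t : ℝ), a < t ∧ t < b ∧
      TitsMinGeodesicOn σ (Set.Icc a b) ∧ σ t = ξ

/-- A closed geodesic of length `L` in the Tits boundary. -/
def IsClosedTitsGeodesic (σ : ℝ → IdealBoundary X) (L : ℝ) : Prop :=
  0 < L ∧ (∀ t, σ (t + L) = σ t) ∧
  ∀ t : ℝ, ∃ δ : ℝ, 0 < δ ∧ TitsMinGeodesicOn σ (Set.Icc (t - δ) (t + δ))

/-- A simple closed geodesic of length `L` in the Tits boundary. -/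
def IsSimpleClosedTitsGeodesic (σ : ℝ → IdealBoundary X) (L : ℝ) : Prop :=
  IsClosedTitsGeodesic σ L ∧ Set.InjOn σ (Set.Ico 0 L)

/-- The ideal boundary of a subset `A ⊆ X`: classes of rays staying in `A`. -/
def SubsetBoundary (A : Set X) : Set (IdealBoundary X) :=
  {ξ | ∃ (f : ℝ → X) (hf : IsRay f), rayClass hf = ξ ∧ ∀ t : ℝ, 0 ≤ t → f t ∈ A}

/-! ### Links (spaces of directions) -/

/-- A germ of a unit-speed geodesic emanating from `x`. -/
def IsGeodGermFrom (x : X) (f : ℝ → X) : Prop :=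
  f 0 = x ∧ ∃ ε : ℝ, 0 < ε ∧ IsGeodesicOn f (Set.Icc 0 ε)

/-- The type of geodesic germs at `x`. -/
def GermFrom (x : X) : Type u := {f : ℝ → X // IsGeodGermFrom x f}

/-- Two germs define the same direction iff they coincide on an initial interval. -/
def germSetoid (x : X) : Setoid (GermFrom x) where
  r f g := ∃ ε : ℝ, 0 < ε ∧ ∀ t ∈ Set.Icc (0 : ℝ) ε, f.1 t = g.1 t
  iseqv := by
    constructor
    · intro f; exact ⟨1, one_pos, fun t _ => rfl⟩
    · rintro f g ⟨ε, hε, h⟩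
      exact ⟨ε, hε, fun t ht => (h t ht).symm⟩
    · rintro f g h ⟨ε₁, hε₁, h₁⟩ ⟨ε₂, hε₂, h₂⟩
      exact ⟨min ε₁ ε₂, lt_min hε₁ hε₂, fun t ht =>
        (h₁ t ⟨ht.1, le_trans ht.2 (min_le_left _ _)⟩).trans
          (h₂ t ⟨ht.1, le_trans ht.2 (min_le_right _ _)⟩)⟩

/-- The link of `X` at `x` (the space of directions): germs of geodesics from `x` up to
initial coincidence. -/
def LinkSpace (x : X) : Type u := Quotient (germSetoid x)

/-- The direction determined by a geodesic germ. -/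
def germClass {x : X} {f : ℝ → X} (hf : IsGeodGermFrom x f) : LinkSpace x :=
  Quotient.mk (germSetoid x) ⟨f, hf⟩

/-- The angle between two directions at `x` (computed from comparison angles, which are
monotone, so the infimum gives the Alexandrov angle). -/
def linkAngle (x : X) (u v : LinkSpace x) : ℝ :=
  sInf {θ : ℝ | ∃ (f g : ℝ → X) (hf : IsGeodGermFrom x f) (hg : IsGeodGermFrom x g)
    (s t εf εg : ℝ), germClass hf = u ∧ germClass hg = v ∧
    0 < s ∧ s ≤ εf ∧ 0 < t ∧ t ≤ εg ∧ IsGeodesicOn f (Set.Icc 0 εf) ∧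
    IsGeodesicOn g (Set.Icc 0 εg) ∧ θ = compAngle x (f s) (g t)}

/-- The link metric `d_x`: the path metric on the space of directions induced by the angle. -/
def linkDist (x : X) (u v : LinkSpace x) : ENNReal :=
  lengthDist (fun a b => ENNReal.ofReal (linkAngle x a b)) u v

/-- The metric topology on the link. -/
instance linkTopology (x : X) : TopologicalSpace (LinkSpace x) :=
  TopologicalSpace.generateFrom
    {B | ∃ (u : LinkSpace x) (ε : ENNReal), 0 < ε ∧ B = {v | linkDist x u v < ε}}

/-- The two directions of the curve `c` at the interior point `c t₀` are at link distance
exactly `π`. -/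
def OppositeDirectionsAt (c : ℝ → X) (t₀ : ℝ) : Prop :=
  ∃ (hf : IsGeodGermFrom (c t₀) (fun s => c (t₀ + s)))
    (hg : IsGeodGermFrom (c t₀) (fun s => c (t₀ - s))),
    linkDist (c t₀) (germClass hf) (germClass hg) = ENNReal.ofReal Real.pi

/-- An R-geodesic: a geodesic such that at every interior point the incoming and outgoing
directions are at link distance exactly `π`. -/
def IsRGeodesicOn (c : ℝ → X) (s : Set ℝ) : Prop :=
  IsGeodesicOn c s ∧ ∀ t₀ ∈ interior s, OppositeDirectionsAt c t₀

/-- `δ` is a minimal geodesic in the link of `x` on the set `s`. -/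
def LinkMinGeodesicOn (x : X) (δ : ℝ → LinkSpace x) (s : Set ℝ) : Prop :=
  ∀ a ∈ s, ∀ b ∈ s, linkDist x (δ a) (δ b) = ENNReal.ofReal |a - b|

/-- A simple closed geodesic of length `M` in the link of `x`. -/
def IsSimpleClosedLinkGeodesic (x : X) (δ : ℝ → LinkSpace x) (M : ℝ) : Prop :=
  0 < M ∧ (∀ t, δ (t + M) = δ t) ∧
  (∀ t : ℝ, ∃ ε : ℝ, 0 < ε ∧ LinkMinGeodesicOn x δ (Set.Icc (t - ε) (t + ε))) ∧
  Set.InjOn δ (Set.Ico 0 M)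

/-- The length of a loop `γ` (of period 1) in the link of `x`. -/
def loopLinkLength (x : X) (γ : ℝ → LinkSpace x) : ENNReal :=
  rhoLength (linkDist x) γ 0 1

/-! ### Loops, free homotopy and first homology -/

/-- Two loops of period `1` are freely homotopic. -/
def FreelyHomotopicLoops {A : Type*} [TopologicalSpace A] (γ₁ γ₂ : ℝ → A) : Prop :=
  ∃ H : ℝ × ℝ → A, Continuous H ∧ (∀ t, H (0, t) = γ₁ t) ∧
    (∀ t, H (1, t) = γ₂ t) ∧ ∀ s t, H (s, t + 1) = H (s, t)

/-- A loop (as a path) represents a nontrivial class in first homology, i.e. its class in the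
abelianized fundamental group (=`H₁` by Hurewicz) is nontrivial. -/
def LoopNontrivialInH1 {A : Type u} [TopologicalSpace A] {a : A} (p : Path a a) : Prop :=
  Abelianization.of
      (FundamentalGroup.fromPath (X := TopCat.of A)
        (Quotient.mk (Path.Homotopic.setoid a a) p)) ≠ 1

/-- `γ` is the loop `log_x ∘ σ` in the link of `x`: for each `t`, `γ t` is the initial
direction of a ray from `x` belonging to the class `σ t`. -/
def IsLogLoop (x : X) (σ : ℝ → IdealBoundary X) (γ : ℝ → LinkSpace x) : Prop :=
  ∀ t : ℝ, ∃ (f : ℝ → X) (hf : IsRay f) (hgf : IsGeodGermFrom x f),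
    rayClass hf = σ t ∧ γ t = germClass hgf

/-- The periodic loop `γ` (period `L`) in the link of `x` defines a nontrivial class in the
first homology of the link. -/
def LoopRepsNontrivialH1 (x : X) (γ : ℝ → LinkSpace x) (L : ℝ) : Prop :=
  ∃ p : Path (γ 0) (γ 0), (∀ s : unitInterval, p s = γ (L * (s : ℝ))) ∧ LoopNontrivialInH1 p

/-- The support set of the closed Tits geodesic `σ` (of period `L`): the points `x` such that
`log_x ∘ σ` represents a nontrivial class in `H₁(Link(X,x))`. -/
def suppSet (σ : ℝ → IdealBoundary X) (L : ℝ) : Set X :=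
  {x | ∃ γ : ℝ → LinkSpace x, IsLogLoop x σ γ ∧ (∀ t, γ (t + L) = γ t) ∧
    LoopRepsNontrivialH1 x γ L}

/-! ### Square complexes -/

/-- The Euclidean distance on `ℝ × ℝ`. -/
def edist2 (p q : ℝ × ℝ) : ℝ := Real.sqrt ((p.1 - q.1) ^ 2 + (p.2 - q.2) ^ 2)

/-- The unit square. -/
def UnitSquare : Set (ℝ × ℝ) := {p | p.1 ∈ Set.Icc (0 : ℝ) 1 ∧ p.2 ∈ Set.Icc (0 : ℝ) 1}

/-- A square complex structure on the metric space `X`: a locally finite piecewise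
Euclidean polygonal complex, all of whose 2-cells are unit Euclidean squares, whose
underlying space is `X` with its path metric. -/
structure SquareComplex (X : Type u) [MetricSpace X] where
  vertices : Set X
  edges : Set (ℝ → X)
  squares : Set (ℝ × ℝ → X)
  edge_geodesic : ∀ e ∈ edges, ∀ s ∈ Set.Icc (0 : ℝ) 1, ∀ t ∈ Set.Icc (0 : ℝ) 1,
    dist (e s) (e t) = |s - t|
  edge_ends : ∀ e ∈ edges, e 0 ∈ vertices ∧ e 1 ∈ vertices
  edge_rev : ∀ e ∈ edges, (fun t => e (1 - t)) ∈ edges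
  square_isometric : ∀ q ∈ squares, ∀ p ∈ UnitSquare, ∀ p' ∈ UnitSquare,
    dist (q p) (q p') = edist2 p p'
  square_sides : ∀ q ∈ squares, (fun t => q (t, 0)) ∈ edges ∧ (fun t => q (0, t)) ∈ edges ∧
    (fun t => q (t, 1)) ∈ edges ∧ (fun t => q (1, t)) ∈ edges
  square_symm_swap : ∀ q ∈ squares, (fun p : ℝ × ℝ => q (p.2, p.1)) ∈ squares
  square_symm_flip : ∀ q ∈ squares, (fun p : ℝ × ℝ => q (1 - p.1, p.2)) ∈ squares
  square_inter : ∀ q ∈ squares, ∀ q' ∈ squares,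
    (q '' UnitSquare ∩ q' '' UnitSquare = ∅) ∨
    (∃ v ∈ vertices, q '' UnitSquare ∩ q' '' UnitSquare = {v}) ∨
    (∃ e ∈ edges, q '' UnitSquare ∩ q' '' UnitSquare = e '' Set.Icc 0 1) ∨
    (q '' UnitSquare = q' '' UnitSquare)
  cover : ∀ x : X, x ∈ vertices ∨ (∃ e ∈ edges, ∃ t ∈ Set.Icc (0 : ℝ) 1, e t = x) ∨
    (∃ q ∈ squares, ∃ p ∈ UnitSquare, q p = x)
  locally_finite : ∀ x : X, ∃ ε : ℝ, 0 < ε ∧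
    {q ∈ squares | ∃ p ∈ UnitSquare, dist (q p) x ≤ ε}.Finite ∧
    {e ∈ edges | ∃ t ∈ Set.Icc (0 : ℝ) 1, dist (e t) x ≤ ε}.Finite

/-- The vertex link of the square complex at `v` contains a simple loop consisting of `n`
edges: a cyclic chain of `n` squares with a corner at `v`, consecutive ones glued along an
edge at `v`, with all the `n` edge-directions at `v` pairwise distinct. -/
def HasSimpleLinkLoop (S : SquareComplex X) (v : X) (n : ℕ) : Prop :=
  ∃ q : ZMod n → (ℝ × ℝ → X),
    (∀ i, q i ∈ S.squares) ∧ (∀ i, q i (0, 0) = v) ∧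
    (∀ i, ∀ t ∈ Set.Icc (0 : ℝ) 1, q i (0, t) = q (i + 1) (t, 0)) ∧
    (∀ i j, i ≠ j → ∃ t ∈ Set.Icc (0 : ℝ) 1, q i (t, 0) ≠ q j (t, 0)) ∧
    (∀ i j, i ≠ j → ∃ p ∈ UnitSquare, q i p ≠ q j p)

/-- A CAT(0) square complex: simply connected and nonpositively curved (all simple loops in
vertex links have at least 4 edges, i.e. length at least `2π`); such a complex, with its
path metric, is a complete CAT(0) space. -/
structure IsCAT0SquareComplex (S : SquareComplex X) : Prop where
  simply_connected : SimplyConnectedSpace X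
  complete : CompleteSpace X
  cat0 : IsCAT0 X
  link_condition : ∀ v ∈ S.vertices, ∀ n : ℕ, 0 < n → n < 4 → ¬ HasSimpleLinkLoop S v n

/-! ### Quarter planes, fake planes, flats, strips -/

def Quadrant : Set (ℝ × ℝ) := {p | 0 ≤ p.1 ∧ 0 ≤ p.2}

def OpenQuadrant : Set (ℝ × ℝ) := {p | 0 < p.1 ∧ 0 < p.2}

/-- A cellular embedding of the first quadrant (with its unit-square tiling) into the square
complex; its image is a quarter plane with cone point `f (0,0)`. -/
def IsQuarterPlaneMap (S : SquareComplex X) (f : ℝ × ℝ → X) : Prop :=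
  Set.InjOn f Quadrant ∧
  ∀ i j : ℕ, (fun p : ℝ × ℝ => f (i + p.1, j + p.2)) ∈ S.squares

/-- A fake plane: a subcomplex homeomorphic to the plane which is the union of five quarter
planes with a common cone point and pairwise disjoint interiors. -/
def IsFakePlane (S : SquareComplex X) (F : Set X) : Prop :=
  Nonempty ((ℝ × ℝ) ≃ₜ F) ∧
  ∃ (v : X) (f : Fin 5 → ℝ × ℝ → X),
    (∀ k, IsQuarterPlaneMap S (f k)) ∧ (∀ k, f k (0, 0) = v) ∧
    (F = ⋃ k, f k '' Quadrant) ∧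
    (∀ k l, k ≠ l → f k '' OpenQuadrant ∩ f l '' OpenQuadrant = ∅)

def StripDomain : Set (ℝ × ℝ) := {p | 0 ≤ p.1 ∧ p.2 ∈ Set.Icc (0 : ℝ) 1}

/-- A flat half-strip in the square complex: a cellular isometric embedding of
`[0,∞) × [0,1]` with its unit-square tiling. -/
def IsFlatHalfStrip (S : SquareComplex X) (f : ℝ × ℝ → X) : Prop :=
  (∀ p ∈ StripDomain, ∀ p' ∈ StripDomain, dist (f p) (f p') = edist2 p p') ∧
  ∀ i : ℕ, (fun p : ℝ × ℝ => f (i + p.1, p.2)) ∈ S.squares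

/-- A singular point of the Tits boundary of a square complex: the class of the rays of some
flat half-strip. -/
def IsSingularPoint (S : SquareComplex X) (ξ : IdealBoundary X) : Prop :=
  ∃ f : ℝ × ℝ → X, IsFlatHalfStrip S f ∧ RepresentsRay (fun t => f (t, 0)) ξ

/-- A flat: an isometrically embedded Euclidean plane. -/
def IsFlat (A : Set X) : Prop :=
  ∃ f : ℝ × ℝ → X, (∀ p p' : ℝ × ℝ, dist (f p) (f p') = edist2 p p') ∧ A = Set.range f

/-- The complete geodesic `c` bounds a flat half-plane. -/
def BoundsFlatHalfPlane (c : ℝ → X) : Prop :=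
  ∃ f : ℝ × ℝ → X,
    (∀ p p' : ℝ × ℝ, 0 ≤ p.2 → 0 ≤ p'.2 → dist (f p) (f p') = edist2 p p') ∧
    ∀ t : ℝ, f (t, 0) = c t

/-! ### Parallel sets, rank one, generic and special elements -/

/-- Two complete geodesics are parallel: they are at bounded Hausdorff distance. -/
def ParallelLines (c c' : ℝ → X) : Prop :=
  ∃ C : ℝ, (∀ t : ℝ, ∃ s : ℝ, dist (c t) (c' s) ≤ C) ∧
    ∀ s : ℝ, ∃ t : ℝ, dist (c t) (c' s) ≤ C

/-- The parallel set `P_g` of a hyperbolic isometry: the union of all complete geodesics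
parallel to its axes. -/
def ParallelSet (g : X ≃ᵢ X) : Set X :=
  {x | ∃ (c c' : ℝ → X) (l : ℝ), IsAxis g c l ∧ IsCompleteGeodesic c' ∧
    ParallelLines c c' ∧ x ∈ Set.range c'}

/-- A rank one isometry: a hyperbolic isometry none of whose axes bounds a flat half-plane. -/
def IsRankOne (g : X ≃ᵢ X) : Prop :=
  IsHyperbolic g ∧ ∀ c l, IsAxis g c l → ¬ BoundsFlatHalfPlane c

/-- A generic element: a hyperbolic isometry whose parallel set is a flat and whose axes are
parallel to no edge in the parallel set. -/
def IsGenericElement (S : SquareComplex X) (g : X ≃ᵢ X) : Prop :=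
  IsHyperbolic g ∧ IsFlat (ParallelSet g) ∧
  ∀ c l, IsAxis g c l → ∀ e ∈ S.edges, (∀ t ∈ Set.Icc (0 : ℝ) 1, e t ∈ ParallelSet g) →
    ∀ c' : ℝ → X, IsCompleteGeodesic c' → Set.range c' ⊆ ParallelSet g →
      (∀ t ∈ Set.Icc (0 : ℝ) 1, e t ∈ Set.range c') → ¬ ParallelLines c c'

/-- A special element: a hyperbolic isometry that is neither generic nor rank one. -/
def IsSpecialElement (S : SquareComplex X) (g : X ≃ᵢ X) : Prop :=
  IsHyperbolic g ∧ ¬ IsGenericElement S g ∧ ¬ IsRankOne g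

/-! ### Group actions -/

/-- An isometry of a square complex is cellular if it permutes the cells. -/
def CellularIso (S : SquareComplex X) (g : X ≃ᵢ X) : Prop :=
  (∀ v ∈ S.vertices, g v ∈ S.vertices) ∧
  (∀ e ∈ S.edges, (fun t => g (e t)) ∈ S.edges) ∧
  (∀ q ∈ S.squares, (fun p => g (q p)) ∈ S.squares)

variable {G : Type*} [Group G]

/-- A proper action: only finitely many group elements move a compact set into itself. -/
def ProperAction (φ : G →* (X ≃ᵢ X)) : Prop :=
  ∀ K : Set X, IsCompact K → {g : G | ((φ g) '' K ∩ K).Nonempty}.Finite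

/-- A cocompact action. -/
def CocompactAction (φ : G →* (X ≃ᵢ X)) : Prop :=
  ∃ K : Set X, IsCompact K ∧ ∀ x : X, ∃ g : G, ∃ y ∈ K, φ g y = x

/-- A proper and cocompact action by cellular isometries on a square complex. -/
def GeometricCellularAction (S : SquareComplex X) (φ : G →* (X ≃ᵢ X)) : Prop :=
  (∀ g : G, CellularIso S (φ g)) ∧ ProperAction φ ∧ CocompactAction φ

/-- The square complex admits a proper, cocompact action by cellular isometries. -/
def AdmitsGeometricCellularAction (S : SquareComplex X) : Prop :=
  ∃ Γ : Subgroup (X ≃ᵢ X), (∀ g ∈ Γ, CellularIso S g) ∧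
    ProperAction Γ.subtype ∧ CocompactAction Γ.subtype

/-! ### Group-theoretic notions -/

/-- A group is virtually free abelian if it has a free abelian subgroup of finite index. -/
def VirtuallyFreeAbelian (G : Type*) [Group G] : Prop :=
  ∃ K : Subgroup G, K.FiniteIndex ∧ ∃ n : ℕ, Nonempty (K ≃* Multiplicative (Fin n → ℤ))

/-- A group contains a free group of rank two. -/
def ContainsRankTwoFreeGroup (G : Type*) [Group G] : Prop :=
  ∃ K : Subgroup G, Nonempty (K ≃* FreeGroup (Fin 2))

/-! ### General polygonal (2-dimensional piecewise Euclidean) complexes -/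

/-- A compact convex polygon in the plane. -/
def IsConvexPolygon (P : Set (ℝ × ℝ)) : Prop :=
  Convex ℝ P ∧ IsCompact P ∧ (interior P).Nonempty ∧ (P.extremePoints ℝ).Finite

/-- A polygonal complex structure on the metric space `X`: a locally finite piecewise
Euclidean 2-complex whose underlying space is `X` with its path metric. Edges are recorded
as pairs (map, length) and 2-cells as pairs (polygon, map). -/
structure PolygonalComplex (X : Type u) [MetricSpace X] where
  vertices : Set X
  edges : Set ((ℝ → X) × ℝ)
  faces : Set ((Set (ℝ × ℝ)) × ((ℝ × ℝ) → X))
  edge_len_pos : ∀ e ∈ edges, 0 < e.2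
  edge_geodesic : ∀ e ∈ edges, ∀ s ∈ Set.Icc 0 e.2, ∀ t ∈ Set.Icc 0 e.2,
    dist (e.1 s) (e.1 t) = |s - t|
  edge_ends : ∀ e ∈ edges, e.1 0 ∈ vertices ∧ e.1 e.2 ∈ vertices
  face_polygon : ∀ F ∈ faces, IsConvexPolygon F.1
  face_isometric : ∀ F ∈ faces, ∀ p ∈ F.1, ∀ q ∈ F.1, dist (F.2 p) (F.2 q) = edist2 p q
  face_corners : ∀ F ∈ faces, ∀ p ∈ F.1.extremePoints ℝ, F.2 p ∈ vertices
  face_boundary : ∀ F ∈ faces, ∀ p ∈ F.1 \ interior F.1,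
    F.2 p ∈ vertices ∨ ∃ e ∈ edges, ∃ t ∈ Set.Icc 0 e.2, e.1 t = F.2 p
  cover : ∀ x : X, x ∈ vertices ∨ (∃ e ∈ edges, ∃ t ∈ Set.Icc 0 e.2, e.1 t = x) ∨
    (∃ F ∈ faces, ∃ p ∈ F.1, F.2 p = x)
  locally_finite : ∀ x : X, ∃ ε : ℝ, 0 < ε ∧
    {F ∈ faces | ∃ p ∈ F.1, dist (F.2 p) x ≤ ε}.Finite ∧
    {e ∈ edges | ∃ t ∈ Set.Icc 0 e.2, dist (e.1 t) x ≤ ε}.Finite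

/-- A CAT(0) 2-complex: a simply connected nonpositively curved (every simple loop in every
link has length at least `2π`) polygonal complex; such a complex is a complete CAT(0)
space. -/
structure IsCAT0TwoComplex (S : PolygonalComplex X) : Prop where
  simply_connected : SimplyConnectedSpace X
  complete : CompleteSpace X
  cat0 : IsCAT0 X
  link_condition : ∀ x : X, ∀ γ : ℝ → LinkSpace x,
    Continuous γ → (∀ t, γ (t + 1) = γ t) → Set.InjOn γ (Set.Ico (0 : ℝ) 1) →
    ENNReal.ofReal (2 * Real.pi) ≤ loopLinkLength x γ

/-- An isometry of a polygonal complex is cellular if it permutes the cells. -/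
def PCellularIso (S : PolygonalComplex X) (g : X ≃ᵢ X) : Prop :=
  (∀ v ∈ S.vertices, g v ∈ S.vertices) ∧
  (∀ e ∈ S.edges, ((fun t => g (e.1 t)), e.2) ∈ S.edges) ∧
  (∀ F ∈ S.faces, (F.1, fun p => g (F.2 p)) ∈ S.faces)

/-- The polygonal complex admits a proper, cocompact action by cellular isometries. -/
def AdmitsGeometricCellularActionP (S : PolygonalComplex X) : Prop :=
  ∃ Γ : Subgroup (X ≃ᵢ X), (∀ g ∈ Γ, PCellularIso S g) ∧
    ProperAction Γ.subtype ∧ CocompactAction Γ.subtype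

/-! ### Miscellaneous -/

/-- `p` is a nearest point of `A` to `x`. -/
def IsNearestPoint (A : Set X) (x p : X) : Prop :=
  p ∈ A ∧ ∀ q ∈ A, dist x p ≤ dist x q

/-- An `ℝ`-tree: a geodesic metric space satisfying the 0-hyperbolic four-point
condition. -/
def IsRTree (Y : Type*) [MetricSpace Y] : Prop :=
  (∀ x y : Y, ∃ f : ℝ → Y, IsGeodesicSegment f x y) ∧
  ∀ x y z w : Y, dist x y + dist z w ≤ max (dist x z + dist y w) (dist x w + dist y z)

end CAT0SC

open CAT0SC

namespace LoopGeo

variable {Λ : Type*} [MetricSpace Λ]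

def Lip1 (c : ℝ → Λ) : Prop := ∀ s t, dist (c s) (c t) ≤ |s - t|

lemma lip1_of_le {c : ℝ → Λ} (h : ∀ s t, s ≤ t → dist (c s) (c t) ≤ t - s) : Lip1 c := by
  intro s t
  rcases le_total s t with h1 | h1
  · rw [abs_sub_comm, abs_of_nonneg (by linarith)]; exact h s t h1
  · rw [dist_comm, abs_of_nonneg (by linarith)]; exact h t s h1

lemma Lip1.le {c : ℝ → Λ} (h : Lip1 c) {s t : ℝ} (hst : s ≤ t) : dist (c s) (c t) ≤ t - s := by
  have := h s t
  rwa [abs_sub_comm, abs_of_nonneg (by linarith)] at this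

lemma Lip1.continuous {c : ℝ → Λ} (h : Lip1 c) : Continuous c := by
  have : LipschitzWith 1 c := LipschitzWith.of_dist_le_mul (fun s t => by
    simpa [Real.dist_eq] using h s t)
  exact this.continuous

lemma Lip1.glue {c₁ c₂ : ℝ → Λ} (h₁ : Lip1 c₁) (h₂ : Lip1 c₂) {a : ℝ} (h : c₁ a = c₂ a) :
    Lip1 (fun t => if t ≤ a then c₁ t else c₂ t) := by
  refine lip1_of_le fun s t hst => ?_
  by_cases hs : s ≤ a <;> by_cases ht : t ≤ a <;> simp only [hs, ht, if_true, if_false]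
  · exact h₁.le hst
  · have e1 := h₁.le hs
    have e2 := h₂.le (not_le.1 ht).le
    have := dist_triangle (c₁ s) (c₁ a) (c₂ t)
    rw [h] at this
    rw [h] at e1
    linarith
  · exact absurd (hst.trans ht) hs
  · exact h₂.le hst

lemma Lip1.comp {c : ℝ → Λ} (h : Lip1 c) {φ : ℝ → ℝ} (hφ : ∀ s t, |φ s - φ t| ≤ |s - t|) :
    Lip1 (fun t => c (φ t)) := fun s t => (h _ _).trans (hφ s t)

lemma Lip1.shift {c : ℝ → Λ} (h : Lip1 c) (a : ℝ) : Lip1 (fun t => c (t + a)) :=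
  h.comp (fun s t => by simp)

structure IsPth (c : ℝ → Λ) (ℓ : ℝ) (u v : Λ) : Prop where
  lip : Lip1 c
  nonneg : 0 ≤ ℓ
  zero : c 0 = u
  last : c ℓ = v

lemma IsPth.dist_le {c : ℝ → Λ} {ℓ : ℝ} {u v : Λ} (h : IsPth c ℓ u v) : dist u v ≤ ℓ := by
  have := h.lip.le h.nonneg
  rw [h.zero, h.last] at this; linarith

/-- clamping to `[0,ℓ]` -/
def clampP (c : ℝ → Λ) (ℓ : ℝ) : ℝ → Λ := fun t => c (max 0 (min t ℓ))

lemma clampP_eq (c : ℝ → Λ) {ℓ t : ℝ} (ht : t ∈ Icc 0 ℓ) : clampP c ℓ t = c t := by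
  simp [clampP, ht.1, ht.2]

lemma clampP_mem (c : ℝ → Λ) {ℓ : ℝ} (h : 0 ≤ ℓ) (t : ℝ) : clampP c ℓ t ∈ c '' Icc 0 ℓ :=
  ⟨_, ⟨le_max_left _ _, max_le h (min_le_right _ _)⟩, rfl⟩

lemma clampP_lip {c : ℝ → Λ} (h : Lip1 c) (ℓ : ℝ) : Lip1 (clampP c ℓ) := by
  refine h.comp fun s t => ?_
  have h1 : |max (min s ℓ) 0 - max (min t ℓ) 0| ≤ |min s ℓ - min t ℓ| :=
    abs_max_sub_max_le_abs _ _ _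
  have h2 : |min s ℓ - min t ℓ| ≤ |s - t| := by
    have := abs_min_sub_min_le_max s ℓ t ℓ
    simpa using this
  rw [max_comm 0, max_comm 0]
  exact h1.trans h2

lemma IsPth.clamp {c : ℝ → Λ} {ℓ : ℝ} {u v : Λ} (h : IsPth c ℓ u v) :
    IsPth (clampP c ℓ) ℓ u v :=
  ⟨clampP_lip h.lip ℓ, h.nonneg, by rw [clampP_eq _ ⟨le_rfl, h.nonneg⟩, h.zero],
    by rw [clampP_eq _ ⟨h.nonneg, le_rfl⟩, h.last]⟩

lemma isClosed_lip1 : IsClosed {c : ℝ → Λ | Lip1 c} := by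
  simp only [Lip1, ofPred_forall]
  refine isClosed_iInter fun s => isClosed_iInter fun t => ?_
  exact isClosed_le ((continuous_apply s).dist (continuous_apply t)) continuous_const

def IsMinPth (S : Set Λ) (c : ℝ → Λ) (ℓ : ℝ) (u v : Λ) : Prop :=
  IsPth c ℓ u v ∧ (∀ t, c t ∈ S) ∧
    ∀ c' ℓ', IsPth c' ℓ' u v → (∀ t ∈ Icc 0 ℓ', c' t ∈ S) → ℓ ≤ ℓ'

lemma exists_min {S : Set Λ} (hS : IsCompact S) {u v : Λ} {c₀ : ℝ → Λ} {ℓ₀ : ℝ}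
    (h₀ : IsPth c₀ ℓ₀ u v) (h₀' : ∀ t ∈ Icc 0 ℓ₀, c₀ t ∈ S) :
    ∃ c ℓ, IsMinPth S c ℓ u v := by
  classical
  set A : Set ℝ := {ℓ | ∃ c, IsPth c ℓ u v ∧ ∀ t ∈ Icc 0 ℓ, c t ∈ S} with hA
  have hne : A.Nonempty := ⟨ℓ₀, c₀, h₀, h₀'⟩
  have hbdd : BddBelow A := ⟨0, by rintro ℓ ⟨c, hc, _⟩; exact hc.nonneg⟩
  set m := sInf A with hm
  set K : Set (ℝ → Λ) := {c | Lip1 c} ∩ {c | c 0 = u} ∩ Set.pi univ (fun _ => S) with hK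
  have hKc : IsCompact K := by
    refine IsCompact.inter_left (isCompact_univ_pi fun _ => hS) ?_
    exact isClosed_lip1.inter (isClosed_eq (continuous_apply 0) continuous_const)
  have hmem : ∀ c ℓ, IsPth c ℓ u v → (∀ t ∈ Icc 0 ℓ, c t ∈ S) → clampP c ℓ ∈ K := by
    intro c ℓ hc hcS
    refine ⟨⟨hc.clamp.lip, hc.clamp.zero⟩, fun t _ => ?_⟩
    obtain ⟨s, hs, he⟩ := clampP_mem c hc.nonneg t
    rw [← he]; exact hcS s hs
  obtain ⟨c, hcK, hcmin⟩ := hKc.exists_isMinOn ⟨_, hmem c₀ ℓ₀ h₀ h₀'⟩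
    (f := fun c : ℝ → Λ => dist (c m) v)
    ((continuous_apply m).dist continuous_const).continuousOn
  have hz : dist (c m) v ≤ 0 := by
    refine le_of_forall_pos_le_add fun ε hε => ?_
    obtain ⟨ℓ, ⟨c', hc', hcS'⟩, hlt⟩ := exists_lt_of_csInf_lt hne (show sInf A < m + ε by linarith)
    have h1 : dist (c m) v ≤ dist (clampP c' ℓ m) v := hcmin (hmem c' ℓ hc' hcS')
    have h2 := hc'.clamp.lip.le (csInf_le hbdd ⟨c', hc', hcS'⟩ : m ≤ ℓ)
    rw [hc'.clamp.last] at h2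
    linarith
  have hz' : c m = v := dist_le_zero.1 hz
  have hm0 : 0 ≤ m := le_csInf hne (by rintro ℓ ⟨c, hc, _⟩; exact hc.nonneg)
  exact ⟨c, m, ⟨hcK.1.1, hm0, hcK.1.2, hz'⟩, fun t => hcK.2 t trivial,
    fun c' ℓ' h h' => csInf_le hbdd ⟨c', h, h'⟩⟩

lemma IsMinPth.injOn {S : Set Λ} {c : ℝ → Λ} {ℓ : ℝ} {u v : Λ} (h : IsMinPth S c ℓ u v) :
    InjOn c (Icc 0 ℓ) := by
  obtain ⟨hp, hS, hmin⟩ := h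
  have key : ∀ a ∈ Icc 0 ℓ, ∀ b ∈ Icc 0 ℓ, a < b → c a ≠ c b := by
    intro a ha b hb hab he
    have := hmin (fun t => if t ≤ a then c t else c (t + (b - a))) (ℓ - (b - a))
      ⟨hp.lip.glue (hp.lip.shift _) (by simp [he]), by linarith [ha.1, hb.2], by
        simp [ha.1, hp.zero], by
        by_cases hh : ℓ - (b - a) ≤ a
        · have hbl : b = ℓ := by linarith [hb.2]
          have : ℓ - (b - a) = a := by linarith
          simp only [this, le_refl, if_true]
          rw [he, hbl, hp.last]
        · simp only [hh, if_false]
          rw [← hp.last]; congr 1; ring⟩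
      (fun t _ => by split_ifs <;> exact hS _)
    linarith
  intro a ha b hb he
  rcases lt_trichotomy a b with h | h | h
  · exact absurd he (key a ha b hb h)
  · exact h
  · exact absurd he.symm (key b hb a ha h)

/-- periodization -/
def perz (p : ℝ → Λ) (ℓ : ℝ) : ℝ → Λ := fun t => p (ℓ * Int.fract (t / ℓ))

lemma perz_lip {p : ℝ → Λ} {ℓ : ℝ} (hp : Lip1 p) (hℓ : 0 < ℓ) (h : p 0 = p ℓ) :
    Lip1 (perz p ℓ) := by
  refine lip1_of_le fun s t hst => ?_
  have hfs : ℓ * Int.fract (s / ℓ) = s - ℓ * ⌊s / ℓ⌋ := by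
    rw [Int.fract]; field_simp
  have hft : ℓ * Int.fract (t / ℓ) = t - ℓ * ⌊t / ℓ⌋ := by
    rw [Int.fract]; field_simp
  have hfl : ⌊s / ℓ⌋ ≤ ⌊t / ℓ⌋ := Int.floor_le_floor (by gcongr)
  have h1 := Int.fract_nonneg (t / ℓ)
  have h2 := (Int.fract_lt_one (s / ℓ)).le
  have b1 : 0 ≤ ℓ * Int.fract (t / ℓ) := by positivity
  have b2 : ℓ * Int.fract (s / ℓ) ≤ ℓ := by nlinarith
  unfold perz
  rcases hfl.eq_or_lt with he | hl
  · have := hp.le (show ℓ * Int.fract (s / ℓ) ≤ ℓ * Int.fract (t / ℓ) by rw [hfs, hft, he]; linarith)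
    refine this.trans_eq ?_
    rw [hfs, hft, he]; ring
  · have e1 := hp.le b2
    have e2 := hp.le b1
    have := dist_triangle (p (ℓ * Int.fract (s / ℓ))) (p ℓ) (p (ℓ * Int.fract (t / ℓ)))
    rw [← h] at this
    rw [← h] at e1
    have hl' : ((⌊s / ℓ⌋ : ℝ)) + 1 ≤ ⌊t / ℓ⌋ := by exact_mod_cast hl
    nlinarith

lemma perz_per (p : ℝ → Λ) {ℓ : ℝ} (hℓ : 0 < ℓ) (t : ℝ) : perz p ℓ (t + ℓ) = perz p ℓ t := by
  unfold perz
  rw [add_div, div_self hℓ.ne', Int.fract_add_one]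

lemma perz_eq (p : ℝ → Λ) {ℓ t : ℝ} (ht : t ∈ Ico 0 ℓ) : perz p ℓ t = p t := by
  have hℓ : 0 < ℓ := ht.1.trans_lt ht.2
  unfold perz
  rw [Int.fract_eq_self.2 ⟨div_nonneg ht.1 hℓ.le, (div_lt_one hℓ).2 ht.2⟩]
  congr 1; field_simp

structure TreeLike (Λ : Type*) [MetricSpace Λ] (r : ℝ) : Prop where
  rpos : 0 < r
  len : ∀ u v : Λ, ∀ ε > 0, ∃ ℓ < dist u v + ε, ∃ c, IsPth c ℓ u v
  noloop : ∀ (ℓ : ℝ) (f : ℝ → Λ), 0 < ℓ → Lip1 f → (∀ t, f (t + ℓ) = f t) →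
    InjOn f (Ico 0 ℓ) → 2 * r ≤ ℓ

variable {r : ℝ}

lemma two_arcs (H : TreeLike Λ r) {c₁ c₂ : ℝ → Λ} {ℓ₁ ℓ₂ : ℝ} {u v : Λ}
    (h₁ : IsPth c₁ ℓ₁ u v) (h₂ : IsPth c₂ ℓ₂ u v) (i₁ : InjOn c₁ (Icc 0 ℓ₁))
    (i₂ : InjOn c₂ (Icc 0 ℓ₂)) (hl : ℓ₁ + ℓ₂ < 2 * r) :
    ∀ t ∈ Icc 0 ℓ₁, c₁ t ∈ c₂ '' Icc 0 ℓ₂ := by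
  intro t₀ ht₀
  by_contra hn
  set E := c₂ '' Icc 0 ℓ₂ with hE
  have hEc : IsClosed E := (isCompact_Icc.image h₂.lip.continuous).isClosed
  have cl : IsClosed (c₁ ⁻¹' E) := hEc.preimage h₁.lip.continuous
  obtain ⟨a, ⟨⟨ha0, hat⟩, haE⟩, hamax⟩ := (isCompact_Icc.inter_right cl).exists_isGreatest
    (s := Icc 0 t₀ ∩ c₁ ⁻¹' E)
    ⟨0, ⟨le_rfl, ht₀.1⟩, by
      show c₁ 0 ∈ E
      rw [h₁.zero, ← h₂.zero]; exact ⟨0, ⟨le_rfl, h₂.nonneg⟩, rfl⟩⟩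
  obtain ⟨b, ⟨⟨hbt, hbl⟩, hbE⟩, hbmin⟩ := (isCompact_Icc.inter_right cl).exists_isLeast
    (s := Icc t₀ ℓ₁ ∩ c₁ ⁻¹' E)
    ⟨ℓ₁, ⟨ht₀.2, le_rfl⟩, by
      show c₁ ℓ₁ ∈ E
      rw [h₁.last, ← h₂.last]; exact ⟨ℓ₂, ⟨h₂.nonneg, le_rfl⟩, rfl⟩⟩
  have hat' : a < t₀ := lt_of_le_of_ne hat (by rintro rfl; exact hn haE)
  have hbt' : t₀ < b := lt_of_le_of_ne hbt (by rintro rfl; exact hn hbE)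
  have hmid : ∀ t, a ≤ t → t ≤ b → c₁ t ∈ E → t = a ∨ t = b := by
    intro t h1 h2 h3
    rcases le_total t t₀ with h | h
    · left; exact le_antisymm (hamax ⟨⟨ha0.trans h1, h⟩, h3⟩) h1
    · right; exact le_antisymm h2 (hbmin ⟨⟨h, h2.trans hbl⟩, h3⟩)
  obtain ⟨a', ha', hae⟩ := haE
  obtain ⟨b', hb', hbe⟩ := hbE
  have hab' : a' ≠ b' := by
    rintro rfl
    have := i₁ ⟨ha0, by linarith⟩ ⟨by linarith, hbl⟩ (hae.symm.trans hbe)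
    linarith
  obtain ⟨σ, m, hm, hσ, hσm⟩ : ∃ σ m : ℝ, 0 < m ∧ (σ = 1 ∨ σ = -1) ∧ b' + σ * m = a' := by
    rcases lt_or_gt_of_ne hab' with h | h
    · exact ⟨-1, b' - a', by linarith, Or.inr rfl, by ring⟩
    · exact ⟨1, a' - b', by linarith, Or.inl rfl, by ring⟩
  have hml : m ≤ ℓ₂ := by
    rcases hσ with rfl | rfl <;> linarith [ha'.1, ha'.2, hb'.1, hb'.2]
  have hrange : ∀ t, 0 ≤ t → t ≤ m → b' + σ * t ∈ Icc 0 ℓ₂ := by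
    intro t h1 h2
    rcases hσ with rfl | rfl <;> constructor <;> linarith [ha'.1, ha'.2, hb'.1, hb'.2]
  have hσ1 : |σ| = 1 := by rcases hσ with rfl | rfl <;> simp
  have hσ0 : σ ≠ 0 := by rcases hσ with rfl | rfl <;> simp
  set p : ℝ → Λ := fun t => if t ≤ b - a then c₁ (t + a) else c₂ (b' + σ * (t - (b - a))) with hp
  have hpl : Lip1 p := by
    refine (h₁.lip.shift a).glue (h₂.lip.comp (φ := fun t => b' + σ * (t - (b - a)))
      (fun s t => ?_)) ?_
    · have : b' + σ * (s - (b - a)) - (b' + σ * (t - (b - a))) = σ * (s - t) := by ring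
      rw [this, abs_mul, hσ1, one_mul]
    · simp [hbe]
  set ℓ := (b - a) + m with hℓ
  have hℓ0 : 0 < ℓ := by linarith
  have hp0 : p 0 = p ℓ := by
    have e1 : p 0 = c₁ a := by simp [hp, show a ≤ b by linarith]
    have e2 : p ℓ = c₂ a' := by
      simp only [hp, hℓ, show ¬ (b - a + m ≤ b - a) by linarith, if_false]
      rw [← hσm]; congr 2; ring
    rw [e1, e2, hae]
  have hmixed : ∀ s t, 0 ≤ s → s ≤ b - a → ¬ t ≤ b - a → t < ℓ → p s ≠ p t := by
    intro s t hs1 hs2 ht1 ht2 he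
    simp only [hp, hs2, ht1, if_true, if_false] at he
    push Not at ht1
    have hr := hrange (t - (b - a)) (by linarith) (by linarith)
    rcases hmid (s + a) (by linarith) (by linarith) (he ▸ ⟨_, hr, rfl⟩) with h | h
    · rw [h, ← hae] at he
      have := i₂ ha' hr he
      rw [← hσm] at this
      have : m = t - (b - a) := mul_left_cancel₀ hσ0 (by linarith)
      linarith
    · rw [h, ← hbe] at he
      have := i₂ hb' hr he
      have : σ * (t - (b - a)) = 0 := by linarith
      rcases mul_eq_zero.1 this with h | h
      · exact hσ0 h
      · linarith
  have hinj : InjOn (perz p ℓ) (Ico 0 ℓ) := by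
    intro s hs t ht he
    rw [perz_eq p hs, perz_eq p ht] at he
    by_cases h1 : s ≤ b - a <;> by_cases h2 : t ≤ b - a
    · simp only [hp, h1, h2, if_true] at he
      have := i₁ ⟨by linarith [hs.1], by linarith⟩ ⟨by linarith [ht.1], by linarith⟩ he
      linarith
    · exact absurd he (hmixed s t hs.1 h1 h2 ht.2)
    · exact absurd he.symm (hmixed t s ht.1 h2 h1 hs.2)
    · simp only [hp, h1, h2, if_false] at he
      push Not at h1 h2
      have := i₂ (hrange _ (by linarith) (by linarith [hs.2])) (hrange _ (by linarith) (by linarith [ht.2])) he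
      have : s - (b - a) = t - (b - a) := mul_left_cancel₀ hσ0 (by linarith)
      linarith
  have := H.noloop ℓ (perz p ℓ) hℓ0 (perz_lip hpl hℓ0 hp0) (perz_per p hℓ0) hinj
  linarith

lemma exists_arc {c : ℝ → Λ} {ℓ : ℝ} {u v : Λ} (h : IsPth c ℓ u v) :
    ∃ c' ℓ', IsMinPth (c '' Icc 0 ℓ) c' ℓ' u v ∧ ℓ' ≤ ℓ := by
  obtain ⟨c', ℓ', h'⟩ := exists_min (isCompact_Icc.image h.lip.continuous) h
    (fun t ht => ⟨t, ht, rfl⟩)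
  exact ⟨c', ℓ', h', h'.2.2 c ℓ h (fun t ht => ⟨t, ht, rfl⟩)⟩

lemma exists_geo (H : TreeLike Λ r) {u v : Λ} (h : dist u v < r) :
    ∃ c, IsPth c (dist u v) u v := by
  obtain ⟨ℓ₁, hl₁, p₁, hp₁⟩ := H.len u v (r - dist u v) (by linarith)
  obtain ⟨c₁, m₁, hc₁, hm₁⟩ := exists_arc hp₁
  have key : m₁ ≤ dist u v := by
    refine le_of_forall_pos_le_add fun ε hε => ?_
    obtain ⟨ℓ₂, hl₂, p₂, hp₂⟩ := H.len u v (min ε (r - dist u v)) (lt_min hε (by linarith))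
    obtain ⟨c₂, m₂, hc₂, hm₂⟩ := exists_arc hp₂
    have e1 := min_le_left ε (r - dist u v)
    have e2 := min_le_right ε (r - dist u v)
    have := two_arcs H hc₂.1 hc₁.1 hc₂.injOn hc₁.injOn (by linarith)
    have := hc₁.2.2 c₂ m₂ hc₂.1 (fun t ht => by
      obtain ⟨s, _, hs⟩ := this t ht
      rw [← hs]; exact hc₁.2.1 s)
    linarith
  have : m₁ = dist u v := le_antisymm key hc₁.1.dist_le
  exact ⟨c₁, this ▸ hc₁.1⟩

lemma geo_dist {u v : Λ} {c : ℝ → Λ} (h : IsPth c (dist u v) u v) {s t : ℝ}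
    (hs : 0 ≤ s) (hst : s ≤ t) (ht : t ≤ dist u v) : dist (c s) (c t) = t - s := by
  refine le_antisymm (h.lip.le hst) ?_
  have e1 := h.lip.le hs
  have e2 := h.lip.le ht
  have := dist_triangle4 (c 0) (c s) (c t) (c (dist u v))
  rw [h.zero, h.last] at this
  rw [h.zero] at e1
  rw [h.last] at e2
  linarith

lemma geo_inj {u v : Λ} {c : ℝ → Λ} (h : IsPth c (dist u v) u v) :
    InjOn c (Icc 0 (dist u v)) := by
  intro s hs t ht he
  rcases le_total s t with h1 | h1
  · have := geo_dist h hs.1 h1 ht.2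
    rw [he, dist_self] at this; linarith
  · have := geo_dist h ht.1 h1 hs.2
    rw [he, dist_self] at this; linarith

lemma geo_sub (H : TreeLike Λ r) {u v : Λ} {c p : ℝ → Λ} {ℓ : ℝ} (h : IsPth c (dist u v) u v)
    (hp : IsPth p ℓ u v) (hl : dist u v + ℓ < 2 * r) :
    ∀ t ∈ Icc 0 (dist u v), c t ∈ p '' Icc 0 ℓ := by
  intro t ht
  obtain ⟨c', m, hc', hm⟩ := exists_arc hp
  obtain ⟨s, _, hs⟩ := two_arcs H h hc'.1 (geo_inj h) hc'.injOn (by linarith) t ht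
  rw [← hs]; exact hc'.2.1 s

lemma geo_unique (H : TreeLike Λ r) {u v : Λ} {c p : ℝ → Λ} (h : IsPth c (dist u v) u v)
    (hp : IsPth p (dist u v) u v) (hl : dist u v < r) :
    ∀ t ∈ Icc 0 (dist u v), c t = p t := by
  intro t ht
  obtain ⟨s, hs, he⟩ := geo_sub H h hp (by linarith) t ht
  have e1 := geo_dist h le_rfl ht.1 ht.2
  have e2 := geo_dist hp le_rfl hs.1 hs.2
  rw [hp.zero, he] at e2
  rw [h.zero] at e1
  rw [← he]; congr 1; linarith

end LoopGeo

namespace LoopGeo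
variable {Λ : Type*} [MetricSpace Λ] {r : ℝ}

lemma geo_close (H : TreeLike Λ r) {u v u' v' : Λ} {c c' : ℝ → Λ} (h : IsPth c (dist u v) u v)
    (h' : IsPth c' (dist u' v') u' v')
    (hr : dist u v + dist u' v' + (dist u u' + dist v v') < 2 * r)
    (h1 : dist u u' < r) (h2 : dist v v' < r) {τ τ' : ℝ}
    (hτ : τ ∈ Icc 0 (dist u v)) (hτ' : τ' ∈ Icc 0 (dist u' v')) :
    dist (c' τ') (c τ) ≤ 3 * (dist u u' + dist v v') + |τ' - τ| := by
  obtain ⟨c₁, hc₁⟩ := exists_geo H (u := u') (v := u) (by rwa [dist_comm])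
  obtain ⟨c₂, hc₂⟩ := exists_geo H h2
  rw [dist_comm u u'] at *
  have n1 : 0 ≤ dist u' u := dist_nonneg
  have n2 : 0 ≤ dist v v' := dist_nonneg
  have n3 : 0 ≤ dist u v := dist_nonneg
  set p : ℝ → Λ := fun t => if t ≤ dist u' u then c₁ t else
    (if t ≤ dist u' u + dist u v then c (t + - dist u' u) else c₂ (t + -(dist u' u + dist u v))) with hp
  have hpp : IsPth p (dist u' u + dist u v + dist v v') u' v' := by
    refine ⟨hc₁.lip.glue ((h.lip.shift _).glue (hc₂.lip.shift _) ?_) ?_, by positivity, ?_, ?_⟩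
    · simp [h.last, hc₂.zero]
    · simp [h.zero, hc₁.last, n3]
    · simp [hp, n1, hc₁.zero]
    · simp only [hp]
      split_ifs with q1 q2
      · have e1 : dist u v = 0 := by linarith
        have e2 : dist v v' = 0 := by linarith
        rw [e1, e2, add_zero, add_zero, hc₁.last, ← dist_eq_zero.1 e2]
        exact dist_eq_zero.1 e1
      · have e2 : dist v v' = 0 := by linarith
        rw [e2, ← dist_eq_zero.1 e2]
        exact (congrArg c (by ring)).trans h.last
      · exact (congrArg c₂ (by ring)).trans hc₂.last
  obtain ⟨s, hs, he⟩ := geo_sub H h' hpp (by linarith) τ' hτ'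
  have d1 : dist u' (c' τ') = τ' := by
    have := geo_dist h' le_rfl hτ'.1 hτ'.2
    rw [h'.zero] at this; linarith
  have d2 : dist u (c τ) = τ := by
    have := geo_dist h le_rfl hτ.1 hτ.2
    rw [h.zero] at this; linarith
  have d3 : dist v (c τ) = dist u v - τ := by
    have := geo_dist h hτ.1 hτ.2 le_rfl
    rw [h.last, dist_comm] at this; linarith
  have ab := le_abs_self (τ' - τ)
  have ab' := neg_abs_le (τ' - τ)
  simp only [hp] at he
  split_ifs at he with q1 q2
  · have e := hc₁.lip.le q1
    rw [hc₁.last, he] at e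
    have e' := hc₁.lip.le hs.1
    rw [hc₁.zero, he] at e'
    have := dist_triangle (c' τ') u (c τ)
    linarith [hs.1]
  · have e := h.lip (s + -dist u' u) τ
    rw [he] at e
    have w1 := geo_dist h (s := 0) (t := s + -dist u' u) le_rfl (by linarith) (by linarith)
    rw [h.zero, he] at w1
    have w2 := dist_triangle u' u (c' τ')
    have w3 := dist_triangle u u' (c' τ')
    rw [dist_comm u u'] at w3
    have : |s + -dist u' u - τ| ≤ dist u' u + |τ' - τ| := by
      rw [abs_le]; constructor <;> linarith
    linarith
  · have e := hc₂.lip.le (s := 0) (t := s + -(dist u' u + dist u v)) (by linarith)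
    rw [he, hc₂.zero] at e
    have w1 := dist_triangle (c' τ') v (c τ)
    have w2 := dist_triangle4 u u' (c' τ') v
    rw [dist_comm u u'] at w2
    rw [dist_comm _ v] at w1
    linarith [hs.2, dist_comm u v, dist_comm (c' τ') v]

def geoMap (H : TreeLike Λ r) (u v : Λ) : ℝ → Λ :=
  open Classical in if h : dist u v < r then (exists_geo H h).choose else fun _ => u

lemma geoMap_spec (H : TreeLike Λ r) {u v : Λ} (h : dist u v < r) :
    IsPth (geoMap H u v) (dist u v) u v := by
  unfold geoMap
  rw [dif_pos h]
  exact (exists_geo H h).choose_spec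

lemma close_homotopic (H : TreeLike Λ r) {f g : ℝ → Λ} (hf : Continuous f) (hg : Continuous g)
    (pf : ∀ t, f (t + 1) = f t) (pg : ∀ t, g (t + 1) = g t) (hd : ∀ t, dist (f t) (g t) < r) :
    FreelyHomotopicLoops f g := by
  set k : ℝ → ℝ := fun s => max 0 (min s 1) with hk
  have hk0 : ∀ s, 0 ≤ k s := fun s => le_max_left _ _
  have hk1 : ∀ s, k s ≤ 1 := fun s => max_le zero_le_one (min_le_right _ _)
  have hkc : Continuous k := by fun_prop
  refine ⟨fun p => geoMap H (f p.2) (g p.2) (k p.1 * dist (f p.2) (g p.2)), ?_, ?_, ?_, ?_⟩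
  · rw [continuous_iff_continuousAt]
    rintro ⟨s₀, t₀⟩
    rw [ContinuousAt, tendsto_iff_dist_tendsto_zero]
    set E : ℝ × ℝ → ℝ := fun p => dist (f t₀) (f p.2) + dist (g t₀) (g p.2) with hE
    have hEc : Continuous E := by fun_prop
    have hE0 : E (s₀, t₀) = 0 := by simp [hE]
    set B : ℝ × ℝ → ℝ := fun p => 3 * E p +
      |k p.1 * dist (f p.2) (g p.2) - k s₀ * dist (f t₀) (g t₀)| with hB
    have hBc : Continuous B := by fun_prop
    have hB0 : B (s₀, t₀) = 0 := by simp [hB, hE0]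
    have hBt : Filter.Tendsto B (nhds (s₀, t₀)) (nhds 0) := by
      rw [← hB0]; exact hBc.continuousAt
    have r0 := H.rpos
    have ev1 : ∀ᶠ p in nhds (s₀, t₀), E p < r :=
      hEc.continuousAt.eventually_lt continuousAt_const (by rw [hE0]; exact r0)
    have ev2 : ∀ᶠ p in nhds (s₀, t₀),
        dist (f t₀) (g t₀) + dist (f p.2) (g p.2) + E p < 2 * r := by
      have hc : Continuous (fun p : ℝ × ℝ => dist (f t₀) (g t₀) + dist (f p.2) (g p.2) + E p) := by
        fun_prop
      refine hc.continuousAt.eventually_lt continuousAt_const ?_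
      dsimp only
      rw [hE0]; linarith [hd t₀]
    refine squeeze_zero' (Filter.Eventually.of_forall fun _ => dist_nonneg) ?_ hBt
    filter_upwards [ev1, ev2] with p h1 h2
    have n1 : 0 ≤ dist (f t₀) (f p.2) := dist_nonneg
    have n2 : 0 ≤ dist (g t₀) (g p.2) := dist_nonneg
    have hEp : E p = dist (f t₀) (f p.2) + dist (g t₀) (g p.2) := rfl
    have mem : ∀ s t, k s * dist (f t) (g t) ∈ Icc 0 (dist (f t) (g t)) := fun s t =>
      ⟨mul_nonneg (hk0 s) dist_nonneg, mul_le_of_le_one_left dist_nonneg (hk1 s)⟩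
    exact geo_close H (geoMap_spec H (hd t₀)) (geoMap_spec H (hd p.2)) h2 (by linarith) (by linarith)
      (mem _ _) (mem _ _)
  · intro t
    simp [hk, (geoMap_spec H (hd t)).zero]
  · intro t
    simp [hk, (geoMap_spec H (hd t)).last]
  · intro s t
    simp only [pf, pg]

lemma fh_symm {A : Type*} [TopologicalSpace A] {f g : ℝ → A} (h : FreelyHomotopicLoops f g) :
    FreelyHomotopicLoops g f := by
  obtain ⟨K, hc, h0, h1, hp⟩ := h
  exact ⟨fun p => K (1 - p.1, p.2), by fun_prop, fun t => by simp [h1], fun t => by simp [h0],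
    fun s t => hp _ _⟩

lemma fh_trans {A : Type*} [TopologicalSpace A] {f g h : ℝ → A} (h₁ : FreelyHomotopicLoops f g)
    (h₂ : FreelyHomotopicLoops g h) : FreelyHomotopicLoops f h := by
  obtain ⟨K, hc, h0, h1, hp⟩ := h₁
  obtain ⟨K', hc', h0', h1', hp'⟩ := h₂
  refine ⟨fun p => if p.1 ≤ 1 / 2 then K (2 * p.1, p.2) else K' (2 * p.1 - 1, p.2), ?_, ?_, ?_, ?_⟩
  · refine Continuous.if_le (by fun_prop) (by fun_prop) (by fun_prop) (by fun_prop) ?_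
    rintro ⟨s, t⟩ hs
    dsimp only at hs
    subst hs
    norm_num [h1, h0']
  · intro t; simp [h0]
  · intro t; norm_num [h1']
  · intro s t; simp only [hp, hp']

lemma fh_shift {A : Type*} [TopologicalSpace A] {f : ℝ → A} (hf : Continuous f)
    (pf : ∀ t, f (t + 1) = f t) (a : ℝ) : FreelyHomotopicLoops f (fun t => f (t + a)) :=
  ⟨fun p => f (p.2 + p.1 * a), by fun_prop, fun t => by simp, fun t => by simp, fun s t => by
    dsimp only; rw [← pf (t + s * a)]; congr 1; ring⟩

lemma fh_refl {A : Type*} [TopologicalSpace A] {f : ℝ → A} (hf : Continuous f)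
    (pf : ∀ t, f (t + 1) = f t) : FreelyHomotopicLoops f f :=
  ⟨fun p => f p.2, by fun_prop, fun t => rfl, fun t => rfl, fun s t => pf t⟩

end LoopGeo

namespace LoopGeo
variable {Λ : Type*} [MetricSpace Λ] {r : ℝ}

def LipC (K : ℝ) (F : ℝ → Λ) : Prop := ∀ s t, dist (F s) (F t) ≤ K * |s - t|

lemma LipC.continuous {K : ℝ} (hK : 0 ≤ K) {F : ℝ → Λ} (h : LipC K F) : Continuous F := by
  have : LipschitzWith ⟨K, hK⟩ F := LipschitzWith.of_dist_le_mul (fun s t => h s t)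
  exact this.continuous

lemma LipC.mono {K K' : ℝ} (hK : K ≤ K') {F : ℝ → Λ} (h : LipC K F) : LipC K' F := fun s t =>
  (h s t).trans (by gcongr)

lemma per_fract {A : Type*} {F : ℝ → A} (h : ∀ t, F (t + 1) = F t) (t : ℝ) :
    F (Int.fract t) = F t := by
  have hp : Function.Periodic F 1 := h
  have := hp.sub_int_mul_eq (x := t) ⌊t⌋
  rwa [mul_one] at this

lemma exists_net (hr : 0 < r) {C : ℝ} (hC : 0 ≤ C) : ∃ T : Set ℝ, T.Finite ∧
    ∀ F F' : ℝ → Λ, LipC C F → LipC C F' → (∀ t, F (t + 1) = F t) → (∀ t, F' (t + 1) = F' t) →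
      (∀ x ∈ T, dist (F x) (F' x) < r / 2) → ∀ s, dist (F s) (F' s) < r := by
  have he : 0 < r / (4 * (C + 1)) := by positivity
  obtain ⟨T, -, hT, hcov⟩ := (isCompact_Icc (a := (0:ℝ)) (b := 1)).finite_cover_balls he
  refine ⟨T, hT, fun F F' hF hF' pF pF' h s => ?_⟩
  rw [← per_fract pF s, ← per_fract pF' s]
  obtain ⟨x, hx, hxs⟩ := mem_iUnion₂.1
    (hcov (show Int.fract s ∈ Icc (0:ℝ) 1 from ⟨Int.fract_nonneg s, (Int.fract_lt_one s).le⟩))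
  rw [Metric.mem_ball, Real.dist_eq] at hxs
  have e1 := hF (Int.fract s) x
  have e2 := hF' x (Int.fract s)
  rw [abs_sub_comm] at e2
  have e3 := h x hx
  have e4 : C * |Int.fract s - x| ≤ r / 4 := by
    have : C * |Int.fract s - x| ≤ C * (r / (4 * (C + 1))) := by gcongr
    refine this.trans ?_
    rw [mul_div_assoc', div_le_div_iff₀ (by positivity) (by positivity)]
    nlinarith
  have := dist_triangle4 (F (Int.fract s)) (F x) (F' x) (F' (Int.fract s))
  linarith

lemma exists_minloop (H : TreeLike Λ r) {γ : ℝ → Λ} {K : ℝ} (hK : 0 ≤ K) (hγ : LipC K γ)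
    (pγ : ∀ t, γ (t + 1) = γ t) :
    ∃ ℓ F, 0 ≤ ℓ ∧ ℓ ≤ K ∧ LipC ℓ F ∧ (∀ t, F (t + 1) = F t) ∧ (∀ t, F t ∈ range γ) ∧
      FreelyHomotopicLoops γ F ∧
      ∀ ℓ' F', 0 ≤ ℓ' → LipC ℓ' F' → (∀ t, F' (t + 1) = F' t) → (∀ t, F' t ∈ range γ) →
        FreelyHomotopicLoops γ F' → ℓ ≤ ℓ' := by
  have hγc : Continuous γ := hγ.continuous hK
  have hS : IsCompact (range γ) := by
    have : range γ = γ '' Icc 0 1 := by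
      refine Subset.antisymm ?_ (image_subset_range _ _)
      rintro _ ⟨t, rfl⟩
      exact ⟨Int.fract t, ⟨Int.fract_nonneg t, (Int.fract_lt_one t).le⟩, per_fract pγ t⟩
    rw [this]; exact isCompact_Icc.image hγc
  set A : Set ℝ := {ℓ | 0 ≤ ℓ ∧ ∃ F, LipC ℓ F ∧ (∀ t, F (t + 1) = F t) ∧ (∀ t, F t ∈ range γ) ∧
      FreelyHomotopicLoops γ F} with hA
  have hKA : K ∈ A := ⟨hK, γ, hγ, pγ, fun t => ⟨t, rfl⟩, fh_refl hγc pγ⟩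
  have hbdd : BddBelow A := ⟨0, fun ℓ h => h.1⟩
  set m := sInf A with hm
  have hmK : m ≤ K := csInf_le hbdd hKA
  have hm0 : 0 ≤ m := le_csInf ⟨_, hKA⟩ fun ℓ h => h.1
  have hex : ∀ n : ℕ, ∃ F : ℝ → Λ, LipC (m + 1 / (n + 1)) F ∧ (∀ t, F (t + 1) = F t) ∧
      (∀ t, F t ∈ range γ) ∧ FreelyHomotopicLoops γ F := by
    intro n
    obtain ⟨ℓ, ⟨_, F, h1, h2⟩, hl⟩ := exists_lt_of_csInf_lt ⟨_, hKA⟩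
      (show sInf A < m + 1 / ((n:ℝ) + 1) by
        have : 0 < 1 / ((n:ℝ) + 1) := by positivity
        linarith)
    exact ⟨F, h1.mono hl.le, h2⟩
  choose Fn hF1 hF2 hF3 hF4 using hex
  have hle1 : ∀ n : ℕ, 1 / ((n:ℝ) + 1) ≤ 1 := fun n => by
    rw [div_le_one (by positivity)]; linarith [(Nat.cast_nonneg n : (0:ℝ) ≤ n)]
  have hcomp : IsCompact (Set.pi univ (fun _ : ℝ => range γ)) := isCompact_univ_pi fun _ => hS
  obtain ⟨F, hFS, hcl⟩ := hcomp.exists_mapClusterPt (u := Fn) (f := Filter.atTop) (by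
    rw [Filter.le_principal_iff, Filter.mem_map]
    exact Filter.Eventually.of_forall fun n t _ => hF3 n t)
  have freq : ∀ N ∈ nhds F, ∃ᶠ n in Filter.atTop, Fn n ∈ N := fun N hN => hcl.frequently hN
  have nb : ∀ s : ℝ, ∀ ε > 0, ∀ᶠ G in nhds F, dist (G s) (F s) < ε := fun s ε hε =>
    (continuous_apply s).continuousAt.eventually (Metric.ball_mem_nhds (F s) hε)
  have hFl : LipC m F := by
    intro s t
    refine le_of_forall_pos_le_add fun ε hε => ?_
    have hη : 0 < ε / (2 + |s - t|) := by positivity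
    set η := ε / (2 + |s - t|) with hηd
    have hη' : η * (2 + |s - t|) = ε := by rw [hηd]; field_simp
    have ev : ∀ᶠ n : ℕ in Filter.atTop, 1 / ((n:ℝ) + 1) < η :=
      tendsto_one_div_add_atTop_nhds_zero_nat.eventually (gt_mem_nhds hη)
    obtain ⟨n, ⟨h1, h2⟩, h3⟩ := ((freq _ ((nb s η hη).and (nb t η hη))).and_eventually ev).exists
    have h4 := hF1 n s t
    have h5 := dist_triangle4 (F s) (Fn n s) (Fn n t) (F t)
    rw [dist_comm (F s) (Fn n s)] at h5
    have h6 : (m + 1 / ((n:ℝ) + 1)) * |s - t| ≤ (m + η) * |s - t| := by gcongr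
    linarith
  have hFp : ∀ t, F (t + 1) = F t := by
    intro t
    refine dist_le_zero.1 (le_of_forall_pos_le_add fun ε hε => ?_)
    obtain ⟨n, h1, h2⟩ := (freq _ ((nb t (ε/2) (by linarith)).and (nb (t+1) (ε/2) (by linarith)))).exists
    have h5 := dist_triangle (F (t + 1)) (Fn n (t + 1)) (F t)
    rw [dist_comm (F (t+1)) (Fn n (t+1))] at h5
    rw [hF2 n t] at h2 h5
    linarith
  obtain ⟨T, hTf, hT⟩ := exists_net (Λ := Λ) H.rpos (show 0 ≤ m + 1 by linarith)
  have hNT : ∀ᶠ G in nhds F, ∀ x ∈ T, dist (G x) (F x) < r / 2 :=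
    (Filter.eventually_all_finite hTf).2 fun x _ => nb x _ (by linarith [H.rpos])
  obtain ⟨n, hn⟩ := (freq _ hNT).exists
  have hl : LipC (m + 1) (Fn n) := (hF1 n).mono (by linarith [hle1 n])
  have hcl := hT (Fn n) F hl (hFl.mono (by linarith)) (hF2 n) hFp hn
  refine ⟨m, F, hm0, hmK, hFl, hFp, fun t => hFS t trivial, fh_trans (hF4 n)
    (close_homotopic H (hl.continuous (by linarith)) (hFl.continuous hm0) (hF2 n) hFp hcl), ?_⟩
  intro ℓ' F' h0 h1 h2 h3 h4
  exact csInf_le hbdd ⟨h0, F', h1, h2, h3, h4⟩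

structure MinLoop (γ δ : ℝ → Λ) (M : ℝ) : Prop where
  pos : 0 < M
  lip : Lip1 δ
  per : ∀ t, δ (t + M) = δ t
  mem : ∀ t, δ t ∈ range γ
  fh : FreelyHomotopicLoops γ (fun t => δ (M * t))
  min : ∀ δ' M', 0 < M' → Lip1 δ' → (∀ t, δ' (t + M') = δ' t) → (∀ t, δ' t ∈ range γ) →
    FreelyHomotopicLoops γ (fun t => δ' (M' * t)) → M ≤ M'

lemma exists_minLoop (H : TreeLike Λ r) {γ : ℝ → Λ} {K : ℝ} (hK : 0 ≤ K) (hγ : LipC K γ)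
    (pγ : ∀ t, γ (t + 1) = γ t) (hnc : ∀ a : Λ, ¬ FreelyHomotopicLoops γ (fun _ => a)) :
    ∃ δ M, M ≤ K ∧ MinLoop γ δ M := by
  obtain ⟨M, F, h0, hMK, hF, pF, mF, fF, mn⟩ := exists_minloop H hK hγ pγ
  have hM : 0 < M := by
    refine lt_of_le_of_ne h0 fun h => hnc (F 0) ?_
    have : F = fun _ => F 0 := by
      funext t
      have := hF t 0
      rw [← h, zero_mul] at this
      exact dist_le_zero.1 this
    rw [← this]; exact fF
  refine ⟨fun t => F (t / M), M, hMK, hM, fun s t => ?_, fun t => ?_, fun t => mF _, ?_, ?_⟩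
  · refine (hF _ _).trans_eq ?_
    rw [← sub_div, abs_div, abs_of_pos hM]; field_simp
  · show F ((t + M) / M) = F (t / M)
    rw [add_div, div_self hM.ne', pF]
  · convert fF using 3
    field_simp
  · intro δ' M' hM' hl hp hm hf
    refine mn M' _ hM'.le (fun s t => (hl _ _).trans_eq ?_) (fun t => ?_) (fun t => hm _) hf
    · rw [← mul_sub, abs_mul, abs_of_pos hM']
    · rw [mul_add, mul_one, hp]

lemma minLoop_geo (H : TreeLike Λ r) {γ δ : ℝ → Λ} {M : ℝ} (h : MinLoop γ δ M) {a b : ℝ}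
    (hab : a ≤ b) (hr : b - a < r) (hM : b - a < M) : dist (δ a) (δ b) = b - a := by
  refine le_antisymm (h.lip.le hab) (not_lt.1 fun hlt => ?_)
  have M0 := h.pos
  set d := dist (δ a) (δ b) with hd
  have d0 : 0 ≤ d := dist_nonneg
  obtain ⟨c, hc⟩ := exists_geo H (u := δ a) (v := δ b) (by linarith)
  have hq : IsPth (fun t => δ (t + a)) (b - a) (δ a) (δ b) :=
    ⟨h.lip.shift a, by linarith, by simp, by simp⟩
  have hcS : ∀ t ∈ Icc 0 d, c t ∈ range γ := by
    intro t ht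
    obtain ⟨s, _, hs⟩ := geo_sub H hc hq (by linarith) t ht
    rw [← hs]; exact h.mem _
  set p : ℝ → Λ := fun t => if t ≤ d then c t else δ (t + (b - d)) with hp
  set M' := d + M - (b - a) with hM'
  have M'0 : 0 < M' := by linarith
  have hpl : Lip1 p := hc.lip.glue (h.lip.shift _) (by simp [hc.last, hd])
  have hpe : p 0 = p M' := by
    have e1 : p 0 = δ a := by simp [hp, d0, hc.zero]
    have e2 : p M' = δ a := by
      simp only [hp, show ¬ M' ≤ d by linarith, if_false]
      rw [← h.per a]; congr 1; rw [hM']; ring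
    rw [e1, e2]
  have hpS : ∀ t, 0 ≤ t → p t ∈ range γ := by
    intro t ht
    by_cases hh : t ≤ d
    · simp only [hp, hh, if_true]; exact hcS t ⟨ht, hh⟩
    · simp only [hp, hh, if_false]; exact h.mem _
  have hzl := perz_lip hpl M'0 hpe
  have hzp := perz_per p M'0
  have fh : FreelyHomotopicLoops γ (fun t => perz p M' (M' * t)) := by
    have c1 : Continuous (fun t => δ (M * t)) := h.lip.continuous.comp (by fun_prop)
    have p1 : ∀ t, δ (M * (t + 1)) = δ (M * t) := fun t => by rw [mul_add, mul_one, h.per]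
    have s1 := fh_trans h.fh (fh_shift c1 p1 (a / M))
    refine fh_trans s1 ?_
    have hpg : ∀ t, perz p M' (M' * (t + 1)) = perz p M' (M' * t) := fun t => by
      rw [mul_add, mul_one, hzp]
    have hph : ∀ t, δ (M * (t + 1 + a / M)) = δ (M * (t + a / M)) := fun t => by
      rw [add_right_comm, p1]
    refine close_homotopic H (c1.comp (by fun_prop)) (hzl.continuous.comp (by fun_prop)) hph hpg ?_
    intro t
    rw [← per_fract (F := fun t => δ (M * (t + a / M))) hph t,
      ← per_fract (F := fun t => perz p M' (M' * t)) hpg t]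
    have f0 := Int.fract_nonneg t
    have f1 := Int.fract_lt_one t
    set x := Int.fract t
    have hx : M * (x + a / M) = M * x + a := by field_simp
    rw [hx, perz_eq p ⟨by positivity, by nlinarith⟩, dist_comm]
    have hdiff : M' * x - M * x = (d - (b - a)) * x := by rw [hM']; ring
    have hneg : (d - (b - a)) * (1 - x) ≤ 0 := mul_nonpos_of_nonpos_of_nonneg (by linarith) (by linarith)
    have hMx : 0 ≤ M * x := by positivity
    have hM'x : 0 ≤ M' * x := by positivity
    by_cases hh : M' * x ≤ d
    · simp only [hp, hh, if_true]
      have e1 := hc.lip.le hM'x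
      have e2 := hc.lip.le hh
      rw [hc.zero] at e1
      rw [hc.last] at e2
      have e3 := h.lip.le (show a ≤ M * x + a by linarith)
      have e4 := h.lip b (M * x + a)
      have t1 := dist_triangle (c (M' * x)) (δ a) (δ (M * x + a))
      have t2 := dist_triangle (c (M' * x)) (δ b) (δ (M * x + a))
      rw [dist_comm _ (δ a)] at t1
      rcases le_total (M * x) (b - a) with q | q
      · rw [abs_of_nonneg (by linarith)] at e4
        linarith
      · rw [abs_of_nonpos (by linarith)] at e4
        nlinarith
    · simp only [hp, hh, if_false]
      refine (h.lip _ _).trans_lt ?_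
      rw [abs_lt]
      constructor <;> nlinarith
  have := h.min (perz p M') M' M'0 hzl hzp (fun t => hpS _ (mul_nonneg M'0.le (Int.fract_nonneg _))) fh
  linarith

theorem abstract_main (H : TreeLike Λ r) {γ : ℝ → Λ} {K : ℝ} (hK : 0 ≤ K) (hγ : LipC K γ)
    (pγ : ∀ t, γ (t + 1) = γ t) (hK4 : K < 4 * r)
    (hnc : ∀ a : Λ, ¬ FreelyHomotopicLoops γ (fun _ => a)) :
    ∃ (δ : ℝ → Λ) (M : ℝ), 0 < M ∧ (∀ t, δ (t + M) = δ t) ∧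
      (∀ t : ℝ, ∃ ε : ℝ, 0 < ε ∧ ∀ a ∈ Icc (t - ε) (t + ε), ∀ b ∈ Icc (t - ε) (t + ε),
        dist (δ a) (δ b) = |a - b|) ∧ InjOn δ (Ico 0 M) ∧
      FreelyHomotopicLoops γ (fun s => δ (M * s)) := by
  obtain ⟨δ, M, hMK, h⟩ := exists_minLoop H hK hγ pγ hnc
  have M0 := h.pos
  have r0 := H.rpos
  have key : ∀ a b, a < b → b - a ≤ M / 2 → δ a ≠ δ b := by
    intro a b hab hh he
    set m := (a + b) / 2 with hm
    set η := (b - a) / 2 with hη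
    have hd : dist (δ m) (δ b) = η := by
      rw [minLoop_geo H h (by linarith) (by linarith) (by linarith)]; linarith
    have g1 : IsPth (fun t => δ (t + m)) (dist (δ m) (δ b)) (δ m) (δ b) :=
      ⟨h.lip.shift m, dist_nonneg, by simp, by rw [hd]; congr 1; linarith⟩
    have g2 : IsPth (fun t => δ (m - t)) (dist (δ m) (δ b)) (δ m) (δ b) :=
      ⟨h.lip.comp (fun s t => by rw [sub_sub_sub_cancel_left, abs_sub_comm]), dist_nonneg, by simp,
        by rw [hd, ← he]; congr 1; linarith⟩
    have := geo_unique H g1 g2 (by rw [hd]; linarith) (η / 2)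
      ⟨by linarith, by rw [hd]; linarith⟩
    have e := minLoop_geo H h (a := m - η / 2) (b := η / 2 + m) (by linarith) (by linarith)
      (by linarith)
    rw [this, dist_self] at e
    linarith
  have key2 : ∀ a b, a < b → b < a + M → δ a ≠ δ b := by
    intro a b hab hb he
    by_cases hh : b - a ≤ M / 2
    · exact key a b hab hh he
    · exact key b (a + M) hb (by linarith) (by rw [h.per, he])
  refine ⟨δ, M, M0, h.per, fun t => ⟨min r M / 3, by positivity, ?_⟩, ?_, h.fh⟩
  · have e1 := min_le_left r M
    have e2 := min_le_right r M
    have e3 : 0 < min r M := by positivity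
    intro a ha b hb
    rcases le_total a b with q | q
    · rw [abs_sub_comm, abs_of_nonneg (by linarith)]
      exact minLoop_geo H h q (by linarith [ha.1, hb.2]) (by linarith [ha.1, hb.2])
    · rw [dist_comm, abs_of_nonneg (by linarith)]
      exact minLoop_geo H h q (by linarith [hb.1, ha.2]) (by linarith [hb.1, ha.2])
  · intro a ha b hb he
    rcases lt_trichotomy a b with q | q | q
    · exact absurd he (key2 a b q (by linarith [ha.1, hb.2]))
    · exact q
    · exact absurd he.symm (key2 b a q (by linarith [hb.1, ha.2]))

end LoopGeo

namespace LoopGeo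
section cat0
variable {X : Type*} [MetricSpace X]

lemma geodOn_dist {f : ℝ → X} {s : ℝ} (hf : IsGeodesicOn f (Icc 0 s)) {a b : ℝ}
    (ha : a ∈ Icc 0 s) (hb : b ∈ Icc 0 s) : dist (f a) (f b) = |a - b| := hf a ha b hb

lemma IsGeodesicOn.mono' {f : ℝ → X} {A B : Set ℝ} (hf : IsGeodesicOn f B) (h : A ⊆ B) :
    IsGeodesicOn f A := fun a ha b hb => hf a (h ha) b (h hb)

lemma cat0_conv (hc : IsCAT0 X) {f : ℝ → X} {s : ℝ} (hs : 0 ≤ s) (hf : IsGeodesicOn f (Icc 0 s))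
    (y : X) {l : ℝ} (hl : l ∈ Icc (0:ℝ) 1) :
    dist y (f (l * s)) ^ 2 ≤ (1 - l) * dist y (f 0) ^ 2 + l * dist y (f s) ^ 2
      - l * (1 - l) * s ^ 2 := by
  have hmem : ∀ {l : ℝ}, l ∈ Icc (0:ℝ) 1 → l * s ∈ Icc 0 s := fun h =>
    ⟨mul_nonneg h.1 hs, mul_le_of_le_one_left hs h.2⟩
  set ψ : ℝ → ℝ := fun l => dist y (f (l * s)) ^ 2 - (l * s) ^ 2 -
    ((1 - l) * dist y (f 0) ^ 2 + l * (dist y (f s) ^ 2 - s ^ 2)) with hψ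
  have hfc : ContinuousOn f (Icc 0 s) := by
    have : LipschitzOnWith 1 f (Icc 0 s) := LipschitzOnWith.of_dist_le_mul fun a ha b hb => by
      rw [hf a ha b hb, Real.dist_eq]; simp
    exact this.continuousOn
  have hfc' : ContinuousOn (fun l => f (l * s)) (Icc 0 1) :=
    hfc.comp (by fun_prop) (fun l hl => hmem hl)
  have hyc : ContinuousOn (fun l => dist y (f (l * s))) (Icc 0 1) :=
    (show Continuous (fun z => dist y z) by fun_prop).comp_continuousOn hfc'
  have hψc : ContinuousOn ψ (Icc 0 1) := by
    refine ((hyc.pow 2).sub (Continuous.continuousOn (by fun_prop))).sub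
      (Continuous.continuousOn (by fun_prop))
  have hmid : ∀ a ∈ Icc (0:ℝ) 1, ∀ b ∈ Icc (0:ℝ) 1, ψ ((a + b) / 2) ≤ (ψ a + ψ b) / 2 := by
    intro a ha b hb
    have hm : (a + b) / 2 ∈ Icc (0:ℝ) 1 := ⟨by linarith [ha.1, hb.1], by linarith [ha.2, hb.2]⟩
    have d1 := hf _ (hmem ha) _ (hmem hm)
    have d2 := hf _ (hmem hm) _ (hmem hb)
    have d3 := hf _ (hmem ha) _ (hmem hb)
    have := hc.2 y (f (a * s)) (f (b * s)) (f ((a + b) / 2 * s)) ⟨by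
      rw [d1, d3, show a * s - (a + b) / 2 * s = (a * s - b * s) / 2 by ring, abs_div]; simp, by
      rw [d2, d3, show (a + b) / 2 * s - b * s = (a * s - b * s) / 2 by ring, abs_div]; simp⟩
    rw [d3, sq_abs] at this
    simp only [hψ]
    nlinarith
  have h0 : ψ 0 = 0 := by simp [hψ]
  have h1 : ψ 1 = 0 := by simp [hψ]
  obtain ⟨m, hm, hmax⟩ := isCompact_Icc.exists_isMaxOn (nonempty_Icc.2 (zero_le_one (α := ℝ))) hψc
  have hmax' : ∀ a ∈ Icc (0:ℝ) 1, ψ a ≤ ψ m := fun a ha => hmax ha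
  have hm0 : ψ m ≤ 0 := by
    rcases le_total m (1 / 2) with h | h
    · have := hmid 0 ⟨le_rfl, zero_le_one⟩ (2 * m) ⟨by linarith [hm.1], by linarith⟩
      rw [show (0 + 2 * m) / 2 = m by ring, h0] at this
      linarith [hmax' (2 * m) ⟨by linarith [hm.1], by linarith⟩]
    · have := hmid 1 ⟨zero_le_one, le_rfl⟩ (2 * m - 1) ⟨by linarith, by linarith [hm.2]⟩
      rw [show (1 + (2 * m - 1)) / 2 = m by ring, h1] at this
      linarith [hmax' (2 * m - 1) ⟨by linarith, by linarith [hm.2]⟩]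
  have := (hmax' l hl).trans hm0
  simp only [hψ] at this
  nlinarith

/-- cosine of comparison angle -/
def cosv (f g : ℝ → X) (s t : ℝ) : ℝ := (s ^ 2 + t ^ 2 - dist (f s) (g t) ^ 2) / (2 * s * t)

lemma cosv_comm (f g : ℝ → X) (s t : ℝ) : cosv f g s t = cosv g f t s := by
  unfold cosv; rw [dist_comm, add_comm (s ^ 2), mul_right_comm]

lemma cosv_mono_left (hc : IsCAT0 X) {f g : ℝ → X} {s t s' : ℝ} (h0 : f 0 = g 0)
    (hf : IsGeodesicOn f (Icc 0 s)) (hg : IsGeodesicOn g (Icc 0 t)) (hs' : 0 < s') (hss : s' ≤ s)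
    (ht : 0 < t) : cosv f g s t ≤ cosv f g s' t := by
  have hs : 0 < s := hs'.trans_le hss
  have key := cat0_conv hc hs.le hf (g t) (l := s' / s) ⟨by positivity, (div_le_one hs).2 hss⟩
  have hd : dist (g t) (f 0) = t := by
    rw [h0, hg t ⟨ht.le, le_rfl⟩ 0 ⟨le_rfl, ht.le⟩]; simp [abs_of_pos ht]
  rw [div_mul_cancel₀ _ hs.ne', hd, dist_comm, dist_comm _ (f s)] at key
  unfold cosv
  rw [div_le_div_iff₀ (by positivity) (by positivity)]
  set l := s' / s with hl
  have hl0 : 0 < l := by positivity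
  have e : s' = l * s := by rw [hl]; field_simp
  rw [e] at key ⊢
  have k2 : l * (s ^ 2 + t ^ 2 - dist (f s) (g t) ^ 2) ≤
      (l * s) ^ 2 + t ^ 2 - dist (f (l * s)) (g t) ^ 2 := by nlinarith
  have : 0 ≤ 2 * s * t := by positivity
  nlinarith [mul_le_mul_of_nonneg_right k2 this]

lemma cosv_mono (hc : IsCAT0 X) {f g : ℝ → X} {s t s' t' : ℝ} (h0 : f 0 = g 0)
    (hf : IsGeodesicOn f (Icc 0 s)) (hg : IsGeodesicOn g (Icc 0 t)) (hs' : 0 < s') (hss : s' ≤ s)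
    (ht' : 0 < t') (htt : t' ≤ t) : cosv f g s t ≤ cosv f g s' t' := by
  refine (cosv_mono_left hc h0 hf hg hs' hss (ht'.trans_le htt)).trans ?_
  rw [cosv_comm f g, cosv_comm f g]
  exact cosv_mono_left hc h0.symm hg (IsGeodesicOn.mono' hf (Icc_subset_Icc_right hss)) ht' htt hs'

lemma compAngle_eq {f g : ℝ → X} {s t : ℝ} {x : X} (hfx : f 0 = x) (hgx : g 0 = x)
    (hf : IsGeodesicOn f (Icc 0 s)) (hg : IsGeodesicOn g (Icc 0 t)) (hs : 0 < s) (ht : 0 < t) :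
    compAngle x (f s) (g t) = Real.arccos (cosv f g s t) := by
  have d1 : dist x (f s) = s := by
    rw [← hfx, hf 0 ⟨le_rfl, hs.le⟩ s ⟨hs.le, le_rfl⟩]; simp [abs_of_pos hs]
  have d2 : dist x (g t) = t := by
    rw [← hgx, hg 0 ⟨le_rfl, ht.le⟩ t ⟨ht.le, le_rfl⟩]; simp [abs_of_pos ht]
  unfold compAngle cosv
  rw [d1, d2]

lemma compAngle_mono (hc : IsCAT0 X) {f g : ℝ → X} {s t s' t' : ℝ} {x : X} (hfx : f 0 = x)
    (hgx : g 0 = x)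
    (hf : IsGeodesicOn f (Icc 0 s)) (hg : IsGeodesicOn g (Icc 0 t)) (hs' : 0 < s') (hss : s' ≤ s)
    (ht' : 0 < t') (htt : t' ≤ t) : compAngle x (f s') (g t') ≤ compAngle x (f s) (g t) := by
  rw [compAngle_eq hfx hgx hf hg (hs'.trans_le hss) (ht'.trans_le htt),
    compAngle_eq hfx hgx (IsGeodesicOn.mono' hf (Icc_subset_Icc_right hss))
      (IsGeodesicOn.mono' hg (Icc_subset_Icc_right htt)) hs' ht']
  exact Real.antitone_arccos (cosv_mono hc (hfx.trans hgx.symm) hf hg hs' hss ht' htt)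

lemma compAngle_comm (x y z : X) : compAngle x y z = compAngle x z y := by
  unfold compAngle
  rw [dist_comm y z, add_comm (dist x y ^ 2), mul_right_comm]

variable {x : X}

lemma linkAngle_nonneg (u v : LinkSpace x) : 0 ≤ linkAngle x u v := by
  apply Real.sInf_nonneg
  rintro θ ⟨f, g, hf, hg, s, t, a, b, -, -, -, -, -, -, -, -, rfl⟩
  exact Real.arccos_nonneg _

lemma linkAngle_le {f g : ℝ → X} (hf : IsGeodGermFrom x f) (hg : IsGeodGermFrom x g)
    {s t a b : ℝ} (hs : 0 < s) (hsa : s ≤ a) (ht : 0 < t) (htb : t ≤ b)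
    (gf : IsGeodesicOn f (Icc 0 a)) (gg : IsGeodesicOn g (Icc 0 b)) :
    linkAngle x (germClass hf) (germClass hg) ≤ compAngle x (f s) (g t) := by
  refine csInf_le ⟨0, ?_⟩ ⟨f, g, hf, hg, s, t, a, b, rfl, rfl, hs, hsa, ht, htb, gf, gg, rfl⟩
  rintro θ ⟨f, g, hf, hg, s, t, a, b, -, -, -, -, -, -, -, -, rfl⟩
  exact Real.arccos_nonneg _

lemma linkAngle_spec (hc : IsCAT0 X) {f g : ℝ → X} (hf : IsGeodGermFrom x f)
    (hg : IsGeodGermFrom x g) {η : ℝ} (hη : 0 < η) :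
    ∃ s₀ > 0, IsGeodesicOn f (Icc 0 s₀) ∧ IsGeodesicOn g (Icc 0 s₀) ∧
      ∀ s t, 0 < s → s ≤ s₀ → 0 < t → t ≤ s₀ →
      compAngle x (f s) (g t) < linkAngle x (germClass hf) (germClass hg) + η := by
  obtain ⟨-, a, ha, ga⟩ := id hf
  obtain ⟨-, b, hb, gb⟩ := id hg
  have hne : linkAngle x (germClass hf) (germClass hg) <
    linkAngle x (germClass hf) (germClass hg) + η := by linarith
  obtain ⟨θ, ⟨f', g', hf', hg', s, t, a', b', e1, e2, hs, hsa, ht, htb, gf, gg, rfl⟩, hlt⟩ :=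
    exists_lt_of_csInf_lt (by exact ⟨_, f, g, hf, hg, a, b, a, b, rfl, rfl, ha, le_rfl, hb, le_rfl, ga, gb,
      rfl⟩) hne
  obtain ⟨ε₁, hε₁, q₁⟩ := Quotient.exact e1
  obtain ⟨ε₂, hε₂, q₂⟩ := Quotient.exact e2
  refine ⟨min (min (min a b) (min s t)) (min ε₁ ε₂), by positivity,
    IsGeodesicOn.mono' ga (Icc_subset_Icc_right (by simp)),
    IsGeodesicOn.mono' gb (Icc_subset_Icc_right (by simp)), ?_⟩
  intro s' t' h1 h2 h3 h4
  simp only [le_min_iff] at h2 h4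
  obtain ⟨⟨⟨_, _⟩, h2s, h2t⟩, h21, h22⟩ := h2
  obtain ⟨⟨⟨_, _⟩, h4s, h4t⟩, h41, h42⟩ := h4
  have w1 : f' s' = f s' := q₁ s' ⟨h1.le, h21⟩
  have w2 : g' t' = g t' := q₂ t' ⟨h3.le, h42⟩
  rw [← w1, ← w2]
  refine lt_of_le_of_lt ?_ hlt
  exact compAngle_mono hc hf'.1 hg'.1 (IsGeodesicOn.mono' gf (Icc_subset_Icc_right hsa))
    (IsGeodesicOn.mono' gg (Icc_subset_Icc_right htb)) h1 h2s h3 h4t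

lemma link_rep (u : LinkSpace x) : ∃ (f : ℝ → X) (hf : IsGeodGermFrom x f), germClass hf = u := by
  induction u using Quotient.inductionOn with
  | h a => exact ⟨a.1, a.2, rfl⟩

lemma linkAngle_le_pi (u v : LinkSpace x) : linkAngle x u v ≤ Real.pi := by
  obtain ⟨f, hf, rfl⟩ := link_rep u
  obtain ⟨g, hg, rfl⟩ := link_rep v
  obtain ⟨-, a, ha, ga⟩ := id hf
  obtain ⟨-, b, hb, gb⟩ := id hg
  exact (linkAngle_le hf hg ha le_rfl hb le_rfl ga gb).trans (Real.arccos_le_pi _)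

lemma linkAngle_self (u : LinkSpace x) : linkAngle x u u = 0 := by
  refine le_antisymm ?_ (linkAngle_nonneg _ _)
  obtain ⟨f, hf, rfl⟩ := link_rep u
  obtain ⟨-, a, ha, ga⟩ := id hf
  refine (linkAngle_le hf hf ha le_rfl ha le_rfl ga ga).trans ?_
  rw [compAngle_eq hf.1 hf.1 ga ga ha ha, cosv]
  have : (a ^ 2 + a ^ 2 - dist (f a) (f a) ^ 2) / (2 * a * a) = 1 := by
    rw [dist_self]; field_simp; norm_num
  rw [this, Real.arccos_one]

lemma linkAngle_comm_le (hc : IsCAT0 X) (u v : LinkSpace x) : linkAngle x u v ≤ linkAngle x v u := by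
  obtain ⟨f, hf, rfl⟩ := link_rep u
  obtain ⟨g, hg, rfl⟩ := link_rep v
  refine le_of_forall_pos_le_add fun η hη => ?_
  obtain ⟨s, hs, g1, g2, h⟩ := linkAngle_spec hc hg hf hη
  have h1 := h s s hs le_rfl hs le_rfl
  have h2 := linkAngle_le hf hg hs le_rfl hs le_rfl g2 g1
  rw [compAngle_comm] at h2
  linarith

lemma linkAngle_comm (hc : IsCAT0 X) (u v : LinkSpace x) : linkAngle x u v = linkAngle x v u :=
  le_antisymm (linkAngle_comm_le hc u v) (linkAngle_comm_le hc v u)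

lemma sq_le_of_arccos {s t d α : ℝ} (hs : 0 < s) (ht : 0 < t) (h0 : 0 ≤ α) (hπ : α ≤ Real.pi)
    (h : Real.arccos ((s ^ 2 + t ^ 2 - d ^ 2) / (2 * s * t)) < α) :
    d ^ 2 ≤ s ^ 2 + t ^ 2 - 2 * s * t * Real.cos α := by
  by_contra hn
  push Not at hn
  have : (s ^ 2 + t ^ 2 - d ^ 2) / (2 * s * t) ≤ Real.cos α := by
    rw [div_le_iff₀ (by positivity)]; nlinarith
  have := Real.antitone_arccos this
  rw [Real.arccos_cos h0 hπ] at this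
  linarith

lemma trig_core (ρ α β : ℝ) : ∃ Q : ℝ,
    Q = (ρ * Real.sin β) ^ 2 + (ρ * Real.sin α) ^ 2
      - 2 * (ρ * Real.sin β) * (ρ * Real.sin α) * Real.cos (α + β) ∧
    (ρ * Real.sin β) ^ 2 + (ρ * (Real.sin (α + β) / 2)) ^ 2
      - 2 * (ρ * Real.sin β) * (ρ * (Real.sin (α + β) / 2)) * Real.cos α = Q / 4 ∧
    (ρ * (Real.sin (α + β) / 2)) ^ 2 + (ρ * Real.sin α) ^ 2
      - 2 * (ρ * (Real.sin (α + β) / 2)) * (ρ * Real.sin α) * Real.cos β = Q / 4 := by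
  have cα := Real.sin_sq_add_cos_sq α
  have cβ := Real.sin_sq_add_cos_sq β
  have e1 : Real.cos α ^ 2 = 1 - Real.sin α ^ 2 := by linarith
  have e2 : Real.cos β ^ 2 = 1 - Real.sin β ^ 2 := by linarith
  refine ⟨_, rfl, ?_, ?_⟩
  · rw [Real.sin_add, Real.cos_add]
    linear_combination (ρ ^ 2 * Real.sin β ^ 2 * (-3/4)) * e1 + (ρ ^ 2 * Real.sin α ^ 2 / 4) * e2
  · rw [Real.sin_add, Real.cos_add]
    linear_combination (ρ ^ 2 * Real.sin α ^ 2 * (-3/4)) * e2 + (ρ ^ 2 * Real.sin β ^ 2 / 4) * e1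

lemma linkAngle_triangle (hc : IsCAT0 X) (u v w : LinkSpace x) :
    linkAngle x u w ≤ linkAngle x u v + linkAngle x v w := by
  obtain ⟨f, hf, rfl⟩ := link_rep u
  obtain ⟨h, hh, rfl⟩ := link_rep v
  obtain ⟨g, hg, rfl⟩ := link_rep w
  refine le_of_forall_pos_le_add fun ε hε => ?_
  set A := linkAngle x (germClass hf) (germClass hh) with hA
  set B := linkAngle x (germClass hh) (germClass hg) with hB
  have A0 : 0 ≤ A := linkAngle_nonneg _ _
  have B0 : 0 ≤ B := linkAngle_nonneg _ _
  by_cases hbig : Real.pi ≤ A + B + ε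
  · exact (linkAngle_le_pi _ _).trans hbig
  push Not at hbig
  obtain ⟨s₁, hs₁, gf, gh, k₁⟩ := linkAngle_spec hc hf hh (half_pos hε)
  obtain ⟨s₂, hs₂, gh', gg, k₂⟩ := linkAngle_spec hc hh hg (half_pos hε)
  set α := A + ε / 2 with hα
  set β := B + ε / 2 with hβ
  set ρ := min s₁ s₂ with hρ
  have ρ0 : 0 < ρ := lt_min hs₁ hs₂
  have ρ1 : ρ ≤ s₁ := min_le_left _ _
  have ρ2 : ρ ≤ s₂ := min_le_right _ _
  have pSα : 0 < Real.sin α := Real.sin_pos_of_pos_of_lt_pi (by linarith) (by linarith)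
  have pSβ : 0 < Real.sin β := Real.sin_pos_of_pos_of_lt_pi (by linarith) (by linarith)
  have pSs : 0 < Real.sin (α + β) := Real.sin_pos_of_pos_of_lt_pi (by linarith) (by linarith)
  set a := ρ * Real.sin β with ha
  set b := ρ * Real.sin α with hb
  set t := ρ * (Real.sin (α + β) / 2) with ht
  have a0 : 0 < a := by positivity
  have b0 : 0 < b := by positivity
  have t0 : 0 < t := by positivity
  have a1 : a ≤ ρ := mul_le_of_le_one_right ρ0.le (Real.sin_le_one _)
  have b1 : b ≤ ρ := mul_le_of_le_one_right ρ0.le (Real.sin_le_one _)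
  have t1 : t ≤ ρ := mul_le_of_le_one_right ρ0.le (by linarith [Real.sin_le_one (α + β)])
  have m1 := k₁ a t a0 (a1.trans ρ1) t0 (t1.trans ρ1)
  have m2 := k₂ t b t0 (t1.trans ρ2) b0 (b1.trans ρ2)
  have gfa := IsGeodesicOn.mono' gf (Icc_subset_Icc_right (a1.trans ρ1))
  have ght := IsGeodesicOn.mono' gh (Icc_subset_Icc_right (t1.trans ρ1))
  have ggb := IsGeodesicOn.mono' gg (Icc_subset_Icc_right (b1.trans ρ2))
  rw [compAngle_eq hf.1 hh.1 gfa ght a0 t0, cosv] at m1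
  rw [compAngle_eq hh.1 hg.1 ght ggb t0 b0, cosv] at m2
  have n1 := sq_le_of_arccos a0 t0 (by linarith) (by linarith) m1
  have n2 := sq_le_of_arccos t0 b0 (by linarith) (by linarith) m2
  obtain ⟨Q, hQ, id1, id2⟩ := trig_core ρ α β
  rw [← ha, ← ht] at id1
  rw [← hb, ← ht] at id2
  rw [← ha, ← hb] at hQ
  rw [id1] at n1
  rw [id2] at n2
  have tri := dist_triangle (f a) (h t) (g b)
  have hd : dist (f a) (g b) ^ 2 ≤ Q := by
    have p1 : 0 ≤ dist (f a) (h t) := dist_nonneg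
    have p2 : 0 ≤ dist (h t) (g b) := dist_nonneg
    have p3 : 0 ≤ dist (f a) (g b) := dist_nonneg
    have p4 : dist (f a) (g b) ^ 2 ≤ (dist (f a) (h t) + dist (h t) (g b)) ^ 2 := by gcongr
    have p5 := sq_nonneg (dist (f a) (h t) - dist (h t) (g b))
    linarith
  have fin := linkAngle_le hf hg a0 le_rfl b0 le_rfl gfa ggb
  rw [compAngle_eq hf.1 hg.1 gfa ggb a0 b0, cosv] at fin
  have : Real.cos (α + β) ≤ (a ^ 2 + b ^ 2 - dist (f a) (g b) ^ 2) / (2 * a * b) := by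
    rw [le_div_iff₀ (by positivity)]; linarith
  have := Real.antitone_arccos this
  rw [Real.arccos_cos (by linarith) (by linarith)] at this
  linarith

lemma ray_unique (hc : IsCAT0 X) {f g : ℝ → X} (hf : IsRay f) (hg : IsRay g) (h0 : f 0 = g 0)
    (h : rayClass hf = rayClass hg) : ∀ s ≥ 0, f s = g s := by
  obtain ⟨C, hC⟩ := Quotient.exact h
  have hC : ∀ t ≥ (0:ℝ), dist (f t) (g t) ≤ C := hC
  intro s hs
  rcases hs.eq_or_lt with rfl | hs
  · exact h0
  have C0 : 0 ≤ C := dist_nonneg.trans (hC 0 le_rfl)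
  have key : ∀ t ≥ s, dist (f s) (g s) * t ≤ s * C := by
    intro t hst
    have t0 : 0 < t := hs.trans_le hst
    have := cosv_mono hc h0 (IsGeodesicOn.mono' hf (Icc_subset_Ici_self : Icc 0 t ⊆ Ici 0))
      (IsGeodesicOn.mono' hg (Icc_subset_Ici_self : Icc 0 t ⊆ Ici 0)) hs hst hs hst
    unfold cosv at this
    rw [div_le_div_iff₀ (by positivity) (by positivity)] at this
    have h2 : (dist (f s) (g s) * t) ^ 2 ≤ (s * dist (f t) (g t)) ^ 2 := by nlinarith
    have h3 := abs_le_of_sq_le_sq h2 (by positivity)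
    have h4 : s * dist (f t) (g t) ≤ s * C := by gcongr; exact hC t t0.le
    linarith [le_abs_self (dist (f s) (g s) * t)]
  by_contra hne
  have hd : 0 < dist (f s) (g s) := dist_pos.2 hne
  have k := key (max s (s * C / dist (f s) (g s) + 1)) (le_max_left _ _)
  have : dist (f s) (g s) * (s * C / dist (f s) (g s) + 1) ≤ s * C :=
    (mul_le_mul_of_nonneg_left (le_max_right _ _) hd.le).trans k
  rw [mul_add, mul_div_cancel₀ _ hd.ne'] at this
  linarith

lemma linkAngle_le_titsAngle {f g : ℝ → X} (hf : IsRay f) (hg : IsRay g)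
    (hf' : IsGeodGermFrom x f) (hg' : IsGeodGermFrom x g) :
    linkAngle x (germClass hf') (germClass hg') ≤ titsAngle (rayClass hf) (rayClass hg) := by
  refine (linkAngle_le hf' hg' one_pos le_rfl one_pos le_rfl
    (IsGeodesicOn.mono' hf Icc_subset_Ici_self) (IsGeodesicOn.mono' hg Icc_subset_Ici_self)).trans ?_
  refine le_csSup ⟨Real.pi, ?_⟩ ⟨f, g, hf, hg, 1, hf'.1.trans hg'.1.symm, rfl, rfl, one_pos, by
    rw [hf'.1]⟩
  rintro θ ⟨f, g, hf, hg, t, -, -, -, -, rfl⟩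
  exact Real.arccos_le_pi _

end cat0
end LoopGeo

namespace LoopGeo
lemma clamp_abs' (s t v : ℝ) : |max 0 (min s v) - max 0 (min t v)| ≤ |s - t| := by
  have h1 := abs_max_sub_max_le_max (0:ℝ) (min s v) 0 (min t v)
  have h2 := abs_min_sub_min_le_max s v t v
  simp at h1 h2
  exact h1.trans h2

section elen
variable {Y : Type*} [PseudoEMetricSpace Y]
open Filter Topology

lemma rhoLength_eq (γ : ℝ → Y) (a b : ℝ) :
    rhoLength (fun x y => edist x y) γ a b = eVariationOn γ (Icc a b) := by
  apply le_antisymm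
  · refine iSup_le fun n => iSup_le fun c => ?_
    have hm : Monotone (fun i : ℕ => c.1 ⟨min i n, by omega⟩) := fun i j hij =>
      c.2.1 (by simp only [Fin.mk_le_mk]; omega)
    have := eVariationOn.sum_le (f := γ) (s := Icc a b) (n := n) hm (fun i => c.2.2 _)
    refine le_trans (le_of_eq ?_) this
    rw [← Fin.sum_univ_eq_sum_range (fun i => edist (γ (c.1 ⟨min (i+1) n, by omega⟩))
      (γ (c.1 ⟨min i n, by omega⟩)))]
    refine Finset.sum_congr rfl fun i _ => ?_
    rw [edist_comm]
    have h1 : i.castSucc = (⟨min (i:ℕ) n, by omega⟩ : Fin (n+1)) := by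
      ext; simp
    have h2 : i.succ = (⟨min ((i:ℕ)+1) n, by omega⟩ : Fin (n+1)) := by
      ext; simp
    rw [h1, h2]
  · refine iSup_le fun ⟨n, u, hu, hs⟩ => ?_
    refine le_trans (le_of_eq ?_) (le_iSup_of_le n (le_iSup_of_le
      ⟨fun i => u i, fun i j h => hu h, fun i => hs _⟩ le_rfl))
    rw [← Fin.sum_univ_eq_sum_range (fun i => edist (γ (u (i+1))) (γ (u i)))]
    refine Finset.sum_congr rfl fun i _ => ?_
    rw [edist_comm]; simp

lemma rhoCont_iff (γ : ℝ → Y) (a b : ℝ) :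
    RhoContinuousOn (fun x y => edist x y) γ a b ↔ ContinuousOn γ (Icc a b) := by
  constructor
  · intro h t ht
    rw [ContinuousWithinAt, EMetric.tendsto_nhds]
    intro ε hε
    obtain ⟨δ, hδ, H⟩ := h t ht ε hε
    filter_upwards [self_mem_nhdsWithin, mem_nhdsWithin_of_mem_nhds (Metric.ball_mem_nhds t hδ)]
      with s hs hs2
    exact (H s hs (by simpa [Real.dist_eq] using hs2)).1
  · intro h t ht ε hε
    have := h t ht
    rw [ContinuousWithinAt, EMetric.tendsto_nhds] at this
    have := this ε hε
    rw [Metric.nhdsWithin_basis_ball.eventually_iff] at this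
    obtain ⟨δ, hδ, H⟩ := this
    refine ⟨δ, hδ, fun s hs hst => ?_⟩
    have := H ⟨by simpa [Real.dist_eq] using hst, hs⟩
    exact ⟨this, by simpa only [edist_comm] using this⟩

/-- length distance -/
def eD (u v : Y) : ENNReal := lengthDist (fun x y => edist x y) u v

lemma eD_le {γ : ℝ → Y} {a b : ℝ} (hab : a ≤ b) (hγ : ContinuousOn γ (Icc a b)) :
    eD (γ a) (γ b) ≤ eVariationOn γ (Icc a b) := by
  have hm : MapsTo (fun t : ℝ => a + t * (b - a)) (Icc 0 1) (Icc a b) := by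
    intro t ht
    constructor
    · have := mul_nonneg ht.1 (sub_nonneg.2 hab); simp only; linarith
    · have := mul_le_of_le_one_left (sub_nonneg.2 hab) ht.2; simp only; linarith
  have hcc : RhoContinuousOn (fun x y => edist x y) (fun t => γ (a + t * (b - a))) 0 1 := by
    rw [rhoCont_iff]
    exact hγ.comp (by fun_prop) hm
  refine le_trans (iInf_le _ ⟨fun t => γ (a + t * (b - a)), by simp, by simp, hcc⟩) ?_
  · rw [rhoLength_eq]
    refine eVariationOn.comp_le_of_monotoneOn γ (fun t : ℝ => a + t * (b - a)) ?_ hm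
    intro s _ t _ hst
    have := mul_le_mul_of_nonneg_right hst (sub_nonneg.2 hab)
    simp only; linarith

lemma eD_lt {u v : Y} {r : ENNReal} (h : eD u v < r) :
    ∃ γ : ℝ → Y, γ 0 = u ∧ γ 1 = v ∧ ContinuousOn γ (Icc 0 1) ∧ eVariationOn γ (Icc 0 1) < r := by
  obtain ⟨γ, hγ⟩ := iInf_lt_iff.1 h
  exact ⟨γ.1, γ.2.1, γ.2.2.1, (rhoCont_iff _ _ _).1 γ.2.2.2, by rwa [← rhoLength_eq]⟩

lemma edist_le_eD (u v : Y) : edist u v ≤ eD u v := by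
  by_contra! h
  obtain ⟨γ, h0, h1, -, hv⟩ := eD_lt h
  have := eVariationOn.edist_le γ (left_mem_Icc.2 (zero_le_one' ℝ)) (right_mem_Icc.2 (zero_le_one' ℝ))
  rw [h0, h1] at this
  exact absurd (this.trans_lt hv) (lt_irrefl _)

lemma eD_self (u : Y) : eD u u = 0 := by
  have := eD_le (γ := fun _ => u) (a := 0) (b := 0) le_rfl continuousOn_const
  simpa [eVariationOn.subsingleton] using this

lemma eD_comm_le (u v : Y) : eD u v ≤ eD v u := by
  by_contra! h
  obtain ⟨γ, h0, h1, hc, hv⟩ := eD_lt h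
  have hm : MapsTo (fun t : ℝ => 1 - t) (Icc 0 1) (Icc 0 1) := fun t ht =>
    ⟨by linarith [ht.2], by linarith [ht.1]⟩
  have e := eD_le (γ := fun t => γ (1 - t)) (a := 0) (b := 1) zero_le_one
    (hc.comp (by fun_prop) hm)
  have e2 := eVariationOn.comp_le_of_antitoneOn γ (fun t : ℝ => 1 - t) (t := Icc 0 1)
    (fun s _ t _ hst => by simp only; linarith) hm
  simp only [sub_zero, sub_self, h0, h1] at e
  exact absurd ((e.trans e2).trans_lt hv) (lt_irrefl _)

lemma eD_comm (u v : Y) : eD u v = eD v u := le_antisymm (eD_comm_le _ _) (eD_comm_le _ _)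

lemma eD_triangle (u v w : Y) : eD u w ≤ eD u v + eD v w := by
  refine le_of_forall_gt_imp_ge_of_dense fun r hr => ?_
  obtain ⟨r1, hr1, r2, hr2, h12⟩ : ∃ r1, eD u v < r1 ∧ ∃ r2, eD v w < r2 ∧ r1 + r2 ≤ r := by
    rcases eq_or_ne r ⊤ with rfl | hrt
    · have := (ENNReal.add_lt_top.1 hr)
      exact ⟨⊤, this.1, ⊤, this.2, le_top⟩
    have ht : eD u v + eD v w ≠ ⊤ := (hr.trans_le le_top).ne
    have h2 := ENNReal.add_ne_top.1 ht
    have hpos : (r - (eD u v + eD v w)) / 2 ≠ 0 := by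
      simp only [ne_eq, ENNReal.div_eq_zero_iff, tsub_eq_zero_iff_le, not_or, not_le]
      exact ⟨hr, by simp⟩
    refine ⟨_, ENNReal.lt_add_right h2.1 hpos, _, ENNReal.lt_add_right h2.2 hpos, ?_⟩
    rw [add_add_add_comm, ENNReal.add_halves]
    rw [add_tsub_cancel_of_le hr.le]
  obtain ⟨γ, h0, h1, hc, hv⟩ := eD_lt hr1
  obtain ⟨γ', h0', h1', hc', hv'⟩ := eD_lt hr2
  set g : ℝ → Y := fun t => if t ≤ 1 then γ t else γ' (t - 1) with hg
  have e1 : EqOn g γ (Icc 0 1) := fun t ht => by simp [hg, ht.2]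
  have e2 : EqOn g (fun t => γ' (t - 1)) (Icc 1 2) := fun t ht => by
    by_cases h : t ≤ 1
    · have : t = 1 := le_antisymm h ht.1
      subst this; simp [hg, h1, h0']
    · simp [hg, h]
  have hm : MapsTo (fun t : ℝ => t - 1) (Icc 1 2) (Icc 0 1) := fun t ht =>
    ⟨by linarith [ht.1], by linarith [ht.2]⟩
  have c1 : ContinuousOn g (Icc 0 1) := hc.congr e1
  have c2 : ContinuousOn g (Icc 1 2) := (hc'.comp (by fun_prop) hm).congr e2
  have c3 : ContinuousOn g (Icc 0 2) := by
    rw [← Icc_union_Icc_eq_Icc (zero_le_one' ℝ) (by norm_num : (1:ℝ) ≤ 2)]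
    exact c1.union_of_isClosed c2 isClosed_Icc isClosed_Icc
  have e := eD_le (γ := g) (a := 0) (b := 2) (by norm_num) c3
  have s := eVariationOn.Icc_add_Icc g (s := univ) (zero_le_one' ℝ) (by norm_num : (1:ℝ) ≤ 2) trivial
  simp only [univ_inter] at s
  rw [← s, eVariationOn.congr e1, eVariationOn.congr e2] at e
  have e3 := eVariationOn.comp_le_of_monotoneOn γ' (fun t : ℝ => t - 1) (t := Icc 1 2)
    (fun s _ t _ hst => by simp only; linarith) hm
  have g0 : g 0 = u := by simp [hg, h0]
  have g2 : g 2 = w := by simp [hg]; norm_num; exact h1'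
  rw [g0, g2] at e
  exact (e.trans (add_le_add hv.le (e3.trans hv'.le))).trans h12

lemma eD_lip {γ : ℝ → Y} (h : ∀ s t, edist (γ s) (γ t) ≤ ENNReal.ofReal |s - t|) (s t : ℝ) :
    eD (γ s) (γ t) ≤ ENNReal.ofReal |s - t| := by
  have hl : LipschitzWith 1 γ := fun s t => by
    simpa [edist_dist, Real.dist_eq] using h s t
  have key : ∀ a b, a ≤ b → eD (γ a) (γ b) ≤ ENNReal.ofReal (b - a) := by
    intro a b hab
    refine (eD_le hab hl.continuous.continuousOn).trans ?_
    have := hl.lipschitzOnWith (s := univ) |>.comp_eVariationOn_le (f := γ) (g := (id : ℝ → ℝ))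
      (s := Icc a b) (fun _ _ => trivial)
    rw [eVariationOn_id_Icc] at this
    simpa using this
  rcases le_total s t with hst | hst
  · rw [abs_sub_comm, abs_of_nonneg (by linarith)]; exact key s t hst
  · rw [eD_comm, abs_of_nonneg (by linarith)]; exact key t s hst

lemma eD_len {u v : Y} {r : ℝ} (h : eD u v < ENNReal.ofReal r) :
    ∃ ℓ : ℝ, 0 ≤ ℓ ∧ ℓ < r ∧ ∃ c : ℝ → Y, eD (c 0) u = 0 ∧ eD (c ℓ) v = 0 ∧
      ∀ s t, eD (c s) (c t) ≤ ENNReal.ofReal |s - t| := by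
  obtain ⟨γ, h0, h1, hc, hv⟩ := eD_lt h
  have hbv : BoundedVariationOn γ (Icc 0 1) := (hv.trans_le le_top).ne
  have hfin : ∀ a ∈ Icc (0:ℝ) 1, ∀ b ∈ Icc (0:ℝ) 1, eVariationOn γ (Icc a b) ≠ ⊤ := fun a ha b hb =>
    hbv.mono (Icc_subset_Icc ha.1 hb.2)
  set V : ℝ → ℝ := fun t => (eVariationOn γ (Icc 0 t)).toReal with hV
  have hVd : ∀ a ∈ Icc (0:ℝ) 1, ∀ b ∈ Icc (0:ℝ) 1, a ≤ b →
      V b = V a + (eVariationOn γ (Icc a b)).toReal := by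
    intro a ha b hb hab
    have s := eVariationOn.Icc_add_Icc γ (s := univ) ha.1 hab trivial
    simp only [univ_inter] at s
    simp only [hV]
    rw [← s, ENNReal.toReal_add (hfin 0 (by simp) a ha) (hfin a ha b hb)]
  have hz : (0:ℝ) ∈ Icc (0:ℝ) 1 := by simp
  have ho : (1:ℝ) ∈ Icc (0:ℝ) 1 := by simp
  have hD : ∀ a ∈ Icc (0:ℝ) 1, ∀ b ∈ Icc (0:ℝ) 1,
      eD (γ a) (γ b) ≤ ENNReal.ofReal |V a - V b| := by
    have key : ∀ a ∈ Icc (0:ℝ) 1, ∀ b ∈ Icc (0:ℝ) 1, a ≤ b →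
        eD (γ a) (γ b) ≤ ENNReal.ofReal |V a - V b| := by
      intro a ha b hb hab
      refine (eD_le hab (hc.mono (Icc_subset_Icc ha.1 hb.2))).trans ?_
      rw [hVd a ha b hb hab, sub_add_cancel_left, abs_neg, abs_of_nonneg ENNReal.toReal_nonneg,
        ENNReal.ofReal_toReal (hfin a ha b hb)]
    intro a ha b hb
    rcases le_total a b with hab | hab
    · exact key a ha b hb hab
    · rw [eD_comm, abs_sub_comm]; exact key b hb a ha hab
  have hVc : ContinuousOn V (Icc 0 1) := by
    intro t ht
    rw [ContinuousWithinAt, tendsto_iff_edist_tendsto_0]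
    have l1 := hbv.tendsto_eVariationOn_Icc_zero_left (x := t) ((hc t ht).mono inter_subset_left)
    have l2 := hbv.tendsto_eVariationOn_Icc_zero_right t ((hc t ht).mono inter_subset_left)
    have l3 := l1.add l2
    rw [add_zero] at l3
    refine tendsto_of_tendsto_of_tendsto_of_le_of_le' tendsto_const_nhds l3
      (Eventually.of_forall fun _ => zero_le) ?_
    filter_upwards [self_mem_nhdsWithin] with y hy
    rw [edist_dist, Real.dist_eq]
    rcases le_total y t with hyt | hyt
    · rw [hVd y hy t ht hyt, sub_add_cancel_left, abs_neg, abs_of_nonneg ENNReal.toReal_nonneg,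
        ENNReal.ofReal_toReal (hfin y hy t ht)]
      rw [inter_eq_right.2 (Icc_subset_Icc hy.1 ht.2)]
      exact le_self_add
    · rw [hVd t ht y hy hyt, add_sub_cancel_left, abs_of_nonneg ENNReal.toReal_nonneg,
        ENNReal.ofReal_toReal (hfin t ht y hy)]
      rw [inter_eq_right.2 (Icc_subset_Icc ht.1 hy.2)]
      exact le_add_self
  have hV0 : V 0 = 0 := by simp [hV, eVariationOn.subsingleton]
  have hV1 : 0 ≤ V 1 := ENNReal.toReal_nonneg
  have hex : ∀ τ : ℝ, ∃ t ∈ Icc (0:ℝ) 1, V t = max 0 (min τ (V 1)) := by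
    intro τ
    have := intermediate_value_Icc (zero_le_one' ℝ) hVc
    rw [hV0] at this
    exact this ⟨le_max_left _ _, max_le hV1 (min_le_right _ _)⟩
  choose T hT hTV using hex
  refine ⟨V 1, hV1, ?_, fun τ => γ (T τ), ?_, ?_, ?_⟩
  · have := (ENNReal.toReal_lt_toReal (hfin 0 hz 1 ho) (by simp)).2 hv
    refine this.trans_le (le_of_eq (ENNReal.toReal_ofReal ?_))
    by_contra! hr
    rw [ENNReal.ofReal_of_nonpos hr.le] at h
    simp at h
  · have := hD _ (hT 0) 0 hz
    rw [hTV, hV0, h0] at this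
    simpa [hV1] using this
  · have := hD _ (hT (V 1)) 1 ho
    rw [hTV, h1] at this
    simpa [hV1] using this
  · intro s t
    refine (hD _ (hT s) _ (hT t)).trans (ENNReal.ofReal_le_ofReal ?_)
    rw [hTV, hTV]
    exact clamp_abs' s t (V 1)

end elen
end LoopGeo

namespace LoopGeo
section bridge
open Filter Topology

structure PM {α : Type*} (D : α → α → ENNReal) : Prop where
  refl : ∀ u, D u u = 0
  symm : ∀ u v, D u v = D v u
  tri : ∀ u v w, D u w ≤ D u v + D v w

/-- points at finite distance from `b` -/
structure Pt {α : Type*} {D : α → α → ENNReal} (hD : PM D) (b : α) where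
  v : α
  h : D b v ≠ ⊤

variable {α : Type*} {D : α → α → ENNReal} {hD : PM D} {b : α}

lemma Pt.fin (p q : Pt hD b) : D p.v q.v ≠ ⊤ := by
  refine ne_top_of_le_ne_top ?_ (hD.tri p.v b q.v)
  rw [hD.symm p.v b]
  exact ENNReal.add_ne_top.2 ⟨p.h, q.h⟩

instance : PseudoMetricSpace (Pt hD b) where
  dist p q := (D p.v q.v).toReal
  dist_self p := by simp [hD.refl]
  dist_comm p q := by rw [hD.symm]
  dist_triangle p q r := by
    rw [← ENNReal.toReal_add (p.fin q) (q.fin r)]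
    exact ENNReal.toReal_mono (ENNReal.add_ne_top.2 ⟨p.fin q, q.fin r⟩) (hD.tri _ _ _)

lemma Pt.dist_def (p q : Pt hD b) : dist p q = (D p.v q.v).toReal := rfl

abbrev Lam (hD : PM D) (b : α) := SeparationQuotient (Pt hD b)

def ι (a : Lam hD b) : α := (Function.surjInv SeparationQuotient.surjective_mk a).v

def κ (u : α) (h : D b u ≠ ⊤) : Lam hD b := SeparationQuotient.mk ⟨u, h⟩

lemma D_ι (a c : Lam hD b) : D (ι a) (ι c) = ENNReal.ofReal (dist a c) := by
  set p := Function.surjInv SeparationQuotient.surjective_mk a with hp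
  set q := Function.surjInv SeparationQuotient.surjective_mk c with hq
  have h1 : SeparationQuotient.mk p = a := Function.surjInv_eq _ _
  have h2 : SeparationQuotient.mk q = c := Function.surjInv_eq _ _
  rw [← h1, ← h2, SeparationQuotient.dist_mk, Pt.dist_def, ENNReal.ofReal_toReal (p.fin q), h1, h2]
  rfl

lemma D_ικ (u : α) (h : D b u ≠ ⊤) : D (ι (κ (hD := hD) u h)) u = 0 := by
  set p := Function.surjInv SeparationQuotient.surjective_mk (κ (hD := hD) u h) with hp
  have h1 : SeparationQuotient.mk p = κ (hD := hD) u h := Function.surjInv_eq _ _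
  have h2 : dist (SeparationQuotient.mk p) (κ (hD := hD) u h) = 0 := by rw [h1, dist_self]
  rw [κ, SeparationQuotient.dist_mk, Pt.dist_def, ENNReal.toReal_eq_zero_iff] at h2
  exact h2.resolve_right (Pt.fin _ _)

lemma ι_fin (a : Lam hD b) : D b (ι a) ≠ ⊤ :=
  (Function.surjInv SeparationQuotient.surjective_mk a).h

lemma κι (a : Lam hD b) (h : D b (ι a) ≠ ⊤) : κ (hD := hD) (ι a) h = a :=
  Function.surjInv_eq SeparationQuotient.surjective_mk a

lemma dist_κ (u v : α) (h : D b u ≠ ⊤) (h' : D b v ≠ ⊤) :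
    dist (κ (hD := hD) u h) (κ (hD := hD) v h') = (D u v).toReal := by
  rw [κ, κ, SeparationQuotient.dist_mk]; rfl

lemma ι_inj : Function.Injective (ι : Lam hD b → α) := by
  intro a c h
  have := D_ι a c
  rw [h, hD.refl] at this
  have h2 := ENNReal.ofReal_eq_zero.1 this.symm
  exact dist_le_zero.1 h2

/-- the topology is generated by balls -/
def TopBy {α : Type*} (D : α → α → ENNReal) (τ : TopologicalSpace α) : Prop :=
  τ = TopologicalSpace.generateFrom {B | ∃ (u : α) (ε : ENNReal), 0 < ε ∧ B = {v | D u v < ε}}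

variable [TopologicalSpace α]

lemma cont_D (htop : TopBy D ‹TopologicalSpace α›) {T : Type*} [TopologicalSpace T] (F : T → α) :
    Continuous F ↔ ∀ u ε, 0 < ε → IsOpen {p | D u (F p) < ε} := by
  unfold TopBy at htop
  subst htop
  rw [continuous_generateFrom_iff]
  constructor
  · intro h u ε hε
    exact h _ ⟨u, ε, hε, rfl⟩
  · rintro h _ ⟨u, ε, hε, rfl⟩
    exact h u ε hε

lemma ι_cont (htop : TopBy D ‹TopologicalSpace α›) : Continuous (ι : Lam hD b → α) := by
  rw [cont_D htop]
  intro u ε _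
  refine isOpen_lt (continuous_of_le_add_edist 1 (by simp) fun x y => ?_) continuous_const
  have := hD.tri u (ι y) (ι x)
  rw [D_ι (D := D)] at this
  rwa [one_mul, edist_dist, dist_comm]

lemma cont_mod (htop : TopBy D ‹TopologicalSpace α›) (hD : PM D) {T : Type*} [TopologicalSpace T] {F G : T → α} (hF : Continuous F)
    (h : ∀ p, D (F p) (G p) = 0) : Continuous G := by
  rw [cont_D htop] at hF ⊢
  intro u ε hε
  convert hF u ε hε using 4 with p
  apply le_antisymm
  · simpa [h p] using hD.tri u (F p) (G p)
  · simpa [hD.symm (G p), h p] using hD.tri u (G p) (F p)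

lemma fh_transfer (htop : TopBy D ‹TopologicalSpace α›) {g : ℝ → α} (pg : ∀ t, g (t + 1) = g t) (hg : ∀ t, D b (g t) ≠ ⊤) {d : ℝ → Lam hD b}
    (h : FreelyHomotopicLoops (fun t => κ (hD := hD) (g t) (hg t)) d) :
    FreelyHomotopicLoops g (fun t => ι (d t)) := by
  obtain ⟨H, hc, h0, h1, hp⟩ := h
  classical
  refine ⟨fun p => if p.1 = 0 then g p.2 else ι (H p), ?_, ?_, ?_, ?_⟩
  · refine cont_mod htop hD ((ι_cont htop).comp hc) fun p => ?_
    by_cases hp0 : p.1 = 0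
    · simp only [hp0, if_true, Function.comp]
      have : p = (0, p.2) := by ext <;> simp [hp0]
      rw [this, h0]
      exact D_ικ _ _
    · simp [hp0, hD.refl]
  · intro t; simp
  · intro t; simp [h1]
  · intro s t
    by_cases hs : s = 0
    · simp [hs, pg]
    · simp [hs, hp]

lemma treeLike_Lam (htop : TopBy D ‹TopologicalSpace α›) (hlen : ∀ u v r, D u v < ENNReal.ofReal r →
      ∃ ℓ : ℝ, 0 ≤ ℓ ∧ ℓ < r ∧ ∃ c : ℝ → α, D (c 0) u = 0 ∧ D (c ℓ) v = 0 ∧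
      ∀ s t, D (c s) (c t) ≤ ENNReal.ofReal |s - t|)
    (hloop : ∀ γ : ℝ → α, Continuous γ → (∀ t, γ (t + 1) = γ t) → InjOn γ (Ico (0 : ℝ) 1) →
      ENNReal.ofReal (2 * Real.pi) ≤ rhoLength D γ 0 1) : TreeLike (Lam hD b) Real.pi := by
  refine ⟨Real.pi_pos, ?_, ?_⟩
  · intro u v ε hε
    have hlt : D (ι u) (ι v) < ENNReal.ofReal (dist u v + ε) := by
      rw [D_ι (D := D)]
      exact (ENNReal.ofReal_lt_ofReal_iff (by positivity)).2 (by linarith)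
    obtain ⟨ℓ, hℓ, hℓ2, c, c0, c1, cl⟩ := hlen _ _ _ hlt
    have hfin : ∀ t, D b (c t) ≠ ⊤ := by
      intro t
      refine ne_top_of_le_ne_top ?_ ((hD.tri b (ι u) (c t)).trans (add_le_add_right
        (hD.tri (ι u) (c 0) (c t)) _))
      rw [hD.symm, hD.symm (ι u) (c 0), c0, zero_add, hD.symm]
      exact ENNReal.add_ne_top.2 ⟨ι_fin u, ne_top_of_le_ne_top (by simp) (cl 0 t)⟩
    refine ⟨ℓ, hℓ2, fun t => κ (c t) (hfin t), ⟨fun s t => ?_, hℓ, ?_, ?_⟩⟩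
    · rw [dist_κ]
      exact ENNReal.toReal_le_of_le_ofReal (abs_nonneg _) (cl s t)
    · rw [← dist_le_zero]
      conv_lhs => rw [← κι u (ι_fin u)]
      rw [dist_κ, c0]; simp
    · rw [← dist_le_zero]
      conv_lhs => rw [← κι v (ι_fin v)]
      rw [dist_κ, c1]; simp
  · intro ℓ f hℓ hf pf hinj
    have hlip : LipschitzWith ℓ.toNNReal (fun t => f (ℓ * t)) :=
      LipschitzWith.of_dist_le_mul fun s t => by
        refine (hf _ _).trans (le_of_eq ?_)
        rw [← mul_sub, abs_mul, abs_of_pos hℓ, Real.dist_eq, Real.coe_toNNReal _ hℓ.le]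
    have := hloop (fun t => ι (f (ℓ * t))) ((ι_cont htop).comp hlip.continuous)
      (fun t => by rw [mul_add, mul_one, pf]) (by
        intro s hs t ht hst
        have := hinj (x₁ := ℓ * s) (x₂ := ℓ * t)
          ⟨mul_nonneg hℓ.le hs.1, by nlinarith [hs.2]⟩
          ⟨mul_nonneg hℓ.le ht.1, by nlinarith [ht.2]⟩ (ι_inj hst)
        exact mul_left_cancel₀ hℓ.ne' this)
    have e : rhoLength D (fun t => ι (f (ℓ * t))) 0 1 =
        rhoLength (fun x y => edist x y) (fun t => f (ℓ * t)) 0 1 := by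
      simp only [rhoLength, D_ι (D := D), edist_dist]
    rw [e, rhoLength_eq] at this
    have h2 := hlip.lipschitzOnWith (s := univ) |>.comp_eVariationOn_le
      (g := (id : ℝ → ℝ)) (s := Icc 0 1) (fun _ _ => trivial)
    rw [eVariationOn_id_Icc] at h2
    have h3 := this.trans h2
    simp only [sub_zero, ENNReal.ofReal_one, mul_one] at h3
    exact (ENNReal.ofReal_le_ofReal_iff hℓ.le).1 h3

theorem bridge_main (htop : TopBy D ‹TopologicalSpace α›) (hD : PM D) (hlen : ∀ u v r, D u v < ENNReal.ofReal r →
      ∃ ℓ : ℝ, 0 ≤ ℓ ∧ ℓ < r ∧ ∃ c : ℝ → α, D (c 0) u = 0 ∧ D (c ℓ) v = 0 ∧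
      ∀ s t, D (c s) (c t) ≤ ENNReal.ofReal |s - t|)
    (hloop : ∀ γ : ℝ → α, Continuous γ → (∀ t, γ (t + 1) = γ t) → InjOn γ (Ico (0 : ℝ) 1) →
      ENNReal.ofReal (2 * Real.pi) ≤ rhoLength D γ 0 1)
    {γ : ℝ → α} {K : ℝ} (hK : 0 ≤ K) (hK4 : K < 4 * Real.pi)
    (hγ : ∀ s t, D (γ s) (γ t) ≤ ENNReal.ofReal (K * |s - t|)) (pγ : ∀ t, γ (t + 1) = γ t)
    (hnc : ∀ a : α, ¬ FreelyHomotopicLoops γ (fun _ => a)) :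
    ∃ (δ : ℝ → α) (M : ℝ), 0 < M ∧ (∀ t, δ (t + M) = δ t) ∧
      (∀ t, ∃ ε > 0, ∀ a ∈ Icc (t - ε) (t + ε), ∀ b ∈ Icc (t - ε) (t + ε),
        D (δ a) (δ b) = ENNReal.ofReal |a - b|) ∧ InjOn δ (Ico 0 M) ∧
      FreelyHomotopicLoops γ (fun s => δ (M * s)) := by
  have hfin : ∀ t, D (γ 0) (γ t) ≠ ⊤ := fun t => ne_top_of_le_ne_top (by simp) (hγ 0 t)
  obtain ⟨δ, M, hM, hp, hg, hi, hh⟩ := abstract_main (treeLike_Lam (hD := hD) (b := γ 0) htop hlen hloop)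
    (γ := fun t => κ (γ t) (hfin t)) hK (fun s t => by
      rw [dist_κ]
      exact ENNReal.toReal_le_of_le_ofReal (by positivity) (hγ s t))
    (fun t => by simp only [pγ]) hK4 (fun a h => hnc _ (fh_transfer htop pγ hfin h))
  refine ⟨fun t => ι (δ t), M, hM, fun t => by simp only [hp], fun t => ?_, ?_, fh_transfer htop pγ hfin hh⟩
  · obtain ⟨ε, hε, h⟩ := hg t
    exact ⟨ε, hε, fun a ha b hb => by rw [D_ι (D := D), h a ha b hb]⟩
  · intro s hs t ht hst
    exact hi hs ht (ι_inj hst)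

end bridge
end LoopGeo

namespace LoopGeo
section final
open Filter Topology

lemma homotopic_cast {A : Type*} [TopologicalSpace A] {x y x' y' : A} {p q : Path x y}
    (h : p.Homotopic q) (hx : x' = x) (hy : y' = y) :
    (p.cast hx hy).Homotopic (q.cast hx hy) := by
  subst hx hy; exact h

lemma not_nontrivial {A : Type*} [TopologicalSpace A] {g : ℝ → A} {a a0 : A} {p : Path a0 a0}
    (hp : ∀ s : unitInterval, p s = g (s : ℝ)) (h : FreelyHomotopicLoops g (fun _ => a)) :
    ¬ LoopNontrivialInH1 p := by
  obtain ⟨H, hH, h0, h1, hper⟩ := h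
  have e0 : a0 = H (0, 0) := by
    have := hp 0
    simp only [Path.source, Set.Icc.coe_zero] at this
    rw [h0, this]
  have e1 : a0 = H (0, 1) := by
    have := hp 1
    simp only [Path.target, Set.Icc.coe_one] at this
    rw [h0, this]
  let P : Path ((0:ℝ), (0:ℝ)) ((0:ℝ), (1:ℝ)) :=
    { toFun := fun s => (0, (s : ℝ)), continuous_toFun := by fun_prop, source' := by simp,
      target' := by simp }
  let Q1 : Path ((0:ℝ), (0:ℝ)) ((1:ℝ), (0:ℝ)) :=
    { toFun := fun s => ((s : ℝ), 0), continuous_toFun := by fun_prop, source' := by simp,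
      target' := by simp }
  let Q2 : Path ((1:ℝ), (0:ℝ)) ((1:ℝ), (1:ℝ)) :=
    { toFun := fun s => (1, (s : ℝ)), continuous_toFun := by fun_prop, source' := by simp,
      target' := by simp }
  let Q3 : Path ((1:ℝ), (1:ℝ)) ((0:ℝ), (1:ℝ)) :=
    { toFun := fun s => (1 - (s : ℝ), 1), continuous_toFun := by fun_prop, source' := by simp,
      target' := by simp }
  let q : Path a0 a :=
    { toFun := fun s => H ((s : ℝ), 0), continuous_toFun := by fun_prop, source' := by simp [e0],
      target' := by simp [h1] }
  have hom : P.Homotopic ((Q1.trans Q2).trans Q3) := SimplyConnectedSpace.paths_homotopic _ _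
  have hom2 := homotopic_cast (hom.map ⟨H, hH⟩) e0 e1
  have k1 : (P.map (f := (⟨H, hH⟩ : C(ℝ × ℝ, A))) hH).cast e0 e1 = p := by
    ext s
    simp [P, hp, h0]
  have k2 : (((Q1.trans Q2).trans Q3).map (f := (⟨H, hH⟩ : C(ℝ × ℝ, A))) hH).cast e0 e1 =
      (q.trans (Path.refl a)).trans q.symm := by
    ext s
    have hp1 : ∀ s, H (s, 1) = H (s, 0) := fun s => by
      have := hper s 0; rwa [zero_add] at this
    simp only [Path.cast_coe, Path.map_coe, Function.comp, Path.trans_apply]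
    split_ifs <;> simp [Q1, Q2, Q3, q, h1, hp1, Path.symm]
  have hom3 : p.Homotopic ((q.trans (Path.refl a)).trans q.symm) := by
    rw [← k1, ← k2]; exact hom2
  have hom4 : ((q.trans (Path.refl a)).trans q.symm).Homotopic (Path.refl a0) :=
    (Path.Homotopic.hcomp ⟨Path.Homotopy.transRefl q⟩ (Path.Homotopic.refl q.symm)).trans
      ⟨(Path.Homotopy.reflTransSymm q).symm⟩
  have hq : (Quotient.mk (Path.Homotopic.setoid a0 a0) p) =
      Quotient.mk (Path.Homotopic.setoid a0 a0) (Path.refl a0) :=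
    Quotient.sound (hom3.trans hom4)
  unfold LoopNontrivialInH1
  rw [hq]
  simp only [ne_eq, not_not]
  exact map_one _

lemma le_lengthDist {α : Type*} (ρ : α → α → ENNReal) (u v : α) : ρ u v ≤ lengthDist ρ u v := by
  refine le_iInf fun γ => ?_
  refine le_trans (le_of_eq ?_) (le_iSup_of_le 1 (le_iSup_of_le
    ⟨fun i => (i : ℕ), fun i j h => Nat.cast_le.2 h, fun i => ?_⟩ le_rfl))
  · simp [γ.2.1, γ.2.2.1]
  · fin_cases i <;> simp

lemma lip_of_local {φ : ℝ → ℝ → ℝ} (hs : ∀ a b, φ a b = φ b a) (h0 : ∀ a, φ a a = 0)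
    (ht : ∀ a b c, φ a c ≤ φ a b + φ b c)
    (hl : ∀ t, ∃ δ > 0, ∀ a ∈ Icc (t - δ) (t + δ), ∀ b ∈ Icc (t - δ) (t + δ), φ a b ≤ |a - b|)
    (a b : ℝ) : φ a b ≤ |a - b| := by
  have key : ∀ a b, a ≤ b → φ a b ≤ b - a := by
    intro a b hab
    have hc : Continuous (φ a) := by
      rw [Metric.continuous_iff]
      intro t ε hε
      obtain ⟨δ, hδ, h⟩ := hl t
      refine ⟨min δ ε, lt_min hδ hε, fun s hs' => ?_⟩
      have hs1 : |s - t| < δ := lt_of_lt_of_le (by simpa [Real.dist_eq] using hs') (min_le_left _ _)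
      have hs2 : |s - t| < ε := lt_of_lt_of_le (by simpa [Real.dist_eq] using hs') (min_le_right _ _)
      have := h s ⟨by linarith [(abs_lt.1 hs1).1], by linarith [(abs_lt.1 hs1).2]⟩ t
        ⟨by linarith, by linarith⟩
      have t1 := ht a s t
      have t2 := ht a t s
      rw [hs t s] at t2
      rw [Real.dist_eq, abs_lt]
      constructor <;> linarith
    have := IsClosed.Icc_subset_of_forall_mem_nhdsWithin (a := a) (b := b)
      (s := {t | φ a t ≤ t - a}) ((isClosed_le hc (by fun_prop)).inter isClosed_Icc)
      (by simp [h0]) (by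
        rintro t ⟨ht1, ht2⟩
        obtain ⟨δ, hδ, h⟩ := hl t
        filter_upwards [Ioo_mem_nhdsGT (show t < t + δ by linarith)] with s hs'
        have e := h t ⟨by linarith, by linarith⟩ s ⟨by linarith [hs'.1], hs'.2.le⟩
        rw [abs_sub_comm, abs_of_pos (by linarith [hs'.1])] at e
        have := ht a t s
        simp only [mem_ofPred_eq] at ht1 ⊢
        linarith)
    exact this ⟨hab, le_rfl⟩
  rcases le_total a b with h | h
  · rw [abs_sub_comm, abs_of_nonneg (by linarith)]; exact key a b h
  · rw [hs, abs_of_nonneg (by linarith)]; exact key b a h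

variable {X : Type*} [MetricSpace X]

@[reducible] def angEM (hc : IsCAT0 X) (x : X) : PseudoEMetricSpace (LinkSpace x) where
  edist u v := ENNReal.ofReal (linkAngle x u v)
  edist_self u := by simp [linkAngle_self]
  edist_comm u v := by rw [linkAngle_comm hc]
  edist_triangle u v w := by
    rw [← ENNReal.ofReal_add (linkAngle_nonneg _ _) (linkAngle_nonneg _ _)]
    exact ENNReal.ofReal_le_ofReal (linkAngle_triangle hc u v w)

lemma eD_link (hc : IsCAT0 X) (x : X) (u v : LinkSpace x) :
    @eD _ (angEM hc x) u v = linkDist x u v := rfl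

lemma pm_link (hc : IsCAT0 X) (x : X) : PM (linkDist x) where
  refl u := @eD_self _ (angEM hc x) u
  symm u v := @eD_comm _ (angEM hc x) u v
  tri u v w := @eD_triangle _ (angEM hc x) u v w

lemma logLoop_unique (hc : IsCAT0 X) {x : X} {σ : ℝ → IdealBoundary X} {γ γ' : ℝ → LinkSpace x}
    (h : IsLogLoop x σ γ) (h' : IsLogLoop x σ γ') : γ = γ' := by
  funext t
  obtain ⟨f, hf, hgf, e1, e2⟩ := h t
  obtain ⟨g, hg, hgg, e3, e4⟩ := h' t
  rw [e2, e4]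
  have key := ray_unique hc hf hg (hgf.1.trans hgg.1.symm) (e1.trans e3.symm)
  exact Quotient.sound ⟨1, one_pos, fun t ht => key t ht.1⟩

lemma logLoop_lip (hc : IsCAT0 X) {x : X} {σ : ℝ → IdealBoundary X} {γ : ℝ → LinkSpace x} {L : ℝ}
    (hσ : IsClosedTitsGeodesic σ L) (h : IsLogLoop x σ γ) (s t : ℝ) :
    linkDist x (γ s) (γ t) ≤ ENNReal.ofReal |s - t| := by
  refine @eD_lip _ (angEM hc x) γ (fun s t => ENNReal.ofReal_le_ofReal ?_) s t
  refine lip_of_local (φ := fun s t => linkAngle x (γ s) (γ t)) (fun a b => linkAngle_comm hc _ _)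
    (fun a => linkAngle_self _) (fun a b c => linkAngle_triangle hc _ _ _) (fun t => ?_) s t
  obtain ⟨δ, hδ, hm⟩ := hσ.2.2 t
  refine ⟨δ, hδ, fun a ha b hb => ?_⟩
  obtain ⟨f, hf, hgf, e1, e2⟩ := h a
  obtain ⟨g, hg, hgg, e3, e4⟩ := h b
  have l1 := le_lengthDist (fun a b => ENNReal.ofReal (titsAngle a b)) (σ a) (σ b)
  have l2 := hm a ha b hb
  unfold titsDist at l2
  rw [l2] at l1
  have l3 := (ENNReal.ofReal_le_ofReal_iff (abs_nonneg _)).1 l1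
  simp only [e2, e4]
  refine le_trans ?_ l3
  rw [← e1, ← e3]
  exact linkAngle_le_titsAngle hf hg hgf hgg

end final
end LoopGeo

open LoopGeo

/-- Let `X` be a locally compact CAT(0) 2-complex and let `c` be a
simple closed geodesic in `∂_T X` of length strictly less than `4π`. Then for every
`x ∈ supp(c)`, the loop `log_x(c)` is freely homotopic in `Link(X,x)` to a simple closed
geodesic in `Link(X,x)`. -/
theorem log_loop_freely_homotopic_to_closed_geodesic
    {X : Type*} [MetricSpace X] [LocallyCompactSpace X]
    (S : PolygonalComplex X) (hS : IsCAT0TwoComplex S)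
    (σ : ℝ → IdealBoundary X) (L : ℝ) (hσ : IsSimpleClosedTitsGeodesic σ L)
    (hL : L < 4 * Real.pi) :
    ∀ x ∈ suppSet σ L, ∀ γ : ℝ → LinkSpace x, IsLogLoop x σ γ → (∀ t, γ (t + L) = γ t) →
      ∃ (δ : ℝ → LinkSpace x) (M : ℝ), IsSimpleClosedLinkGeodesic x δ M ∧
        FreelyHomotopicLoops (fun s : ℝ => γ (L * s)) (fun s : ℝ => δ (M * s)) := by
  rintro x ⟨γ', hγ', -, p, hp, hnt⟩ γ hγ pγ
  have hc := hS.cat0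
  obtain rfl := logLoop_unique hc hγ hγ'
  have hL0 : 0 < L := hσ.1.1
  obtain ⟨δ, M, hM, h1, h2, h3, h4⟩ := bridge_main (α := LinkSpace x) (D := linkDist x) rfl
    (pm_link hc x) (fun u v r h => @eD_len _ (angEM hc x) u v r h) (hS.link_condition x)
    (γ := fun s => γ (L * s)) hL0.le hL (fun s t => by
      refine (logLoop_lip hc hσ.1 hγ _ _).trans (le_of_eq ?_)
      rw [← mul_sub, abs_mul, abs_of_pos hL0])
    (fun t => by simp only [mul_add, mul_one, pγ])
    (fun a h => not_nontrivial (p := p) hp h hnt)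
  exact ⟨δ, M, ⟨hM, h1, h2, h3⟩, h4⟩
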